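/- arXiv:math/0202267 — 4 statements merged into one kernel-verified Lean document; each statement's English description precedes it below -/
import Mathlib

section
/- If H_n is the Ehrhart polynomial of the n-th Birkhoff polytope, then for every integer t, H_n(−n−t) = (−1)^{n−1} H_n(t). -/
open Polynomial in
theorem Polynomial.preHilbertPoly_eval_reflect (k i : ℕ) (hi : i ≤ k + 1) (x : ℚ) :
    (preHilbertPoly ℚ k (k + 1 - i)).eval x = (-1) ^ k * (preHilbertPoly ℚ k i).eval (-x) := by
  have h : -x - i + 1 = -(x + i - 1) := by ring
  simp only [preHilbertPoly, eval_smul, eval_comp, eval_add, eval_sub, eval_X, eval_C, eval_one,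
    smul_eq_mul, h, ascPochhammer_eval_neg_eq_descPochhammer, descPochhammer_eval_eq_ascPochhammer]
  rw [Nat.cast_sub hi, mul_left_comm ((-1) ^ k), ← mul_assoc ((-1) ^ k), ← mul_pow]
  norm_num
  left
  congr 1
  ring

open Polynomial in
theorem Polynomial.hilbertPoly_succ_eq_sum_range (p : ℚ[X]) (k N : ℕ) (hp : p.natDegree ≤ N) :
    hilbertPoly p (k + 1) =
      ∑ i ∈ Finset.range (N + 1), p.coeff i • preHilbertPoly ℚ k i := by
  rw [hilbertPoly_succ]
  refine Finset.sum_subset (fun i hi => ?_) (fun i _ hi => ?_)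
  · rw [Finset.mem_range]
    exact Nat.lt_succ_of_le ((le_natDegree_of_mem_supp i hi).trans hp)
  · rw [notMem_support_iff.mp hi, zero_smul]

open Polynomial in
theorem Polynomial.hilbertPoly_reflect_eval (p : ℚ[X]) (k : ℕ) (hp : p.natDegree ≤ k + 1) (x : ℚ) :
    (hilbertPoly (p.reflect (k + 1)) (k + 1)).eval x =
      (-1) ^ k * (hilbertPoly p (k + 1)).eval (-x) := by
  have hp' : (p.reflect (k + 1)).natDegree ≤ k + 1 := by
    refine natDegree_le_iff_coeff_eq_zero.mpr fun m hm => ?_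
    rw [coeff_reflect, revAt_eq_self_of_lt hm]
    exact coeff_eq_zero_of_natDegree_lt (hp.trans_lt hm)
  rw [hilbertPoly_succ_eq_sum_range _ _ _ hp, hilbertPoly_succ_eq_sum_range _ _ _ hp',
    ← Finset.sum_flip, eval_finsetSum, eval_finsetSum, Finset.mul_sum]
  refine Finset.sum_congr rfl fun i hi => ?_
  have hi' : i ≤ k + 1 := by simpa [Nat.lt_succ_iff] using hi
  rw [coeff_reflect, revAt_le (Nat.sub_le _ _), Nat.sub_sub_self hi', eval_smul, eval_smul,
    preHilbertPoly_eval_reflect k i hi', smul_eq_mul, smul_eq_mul]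
  ring

/-- `f (1 - X) ^ d = h` and `g (1 - X) ^ d = X ^ d h(1 / X)` for a polynomial `h` of degree at most
`d`, that is, the rational functions satisfy `g(X) = (-1) ^ d f(1 / X)`. -/
def IsReciprocal (d : ℕ) (f g : PowerSeries ℚ) : Prop :=
  ∃ h : Polynomial ℚ, h.natDegree ≤ d ∧ f * (1 - PowerSeries.X) ^ d = (h : PowerSeries ℚ) ∧
    g * (1 - PowerSeries.X) ^ d = (h.reflect d : PowerSeries ℚ)

namespace IsReciprocal

theorem one : IsReciprocal 0 1 1 := ⟨1, by simp, by simp, by simp⟩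

theorem zero (d : ℕ) : IsReciprocal d 0 0 := ⟨0, by simp, by simp, by simp⟩

theorem add {d : ℕ} {f g f' g' : PowerSeries ℚ} (h : IsReciprocal d f g)
    (h' : IsReciprocal d f' g') : IsReciprocal d (f + f') (g + g') := by
  obtain ⟨p, hp, hf, hg⟩ := h
  obtain ⟨p', hp', hf', hg'⟩ := h'
  exact ⟨p + p', Polynomial.natDegree_add_le_of_degree_le hp hp',
    by rw [add_mul, hf, hf', Polynomial.coe_add],
    by rw [add_mul, hg, hg', Polynomial.reflect_add, Polynomial.coe_add]⟩

theorem sum {ι : Type*} {d : ℕ} (s : Finset ι) {f g : ι → PowerSeries ℚ}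
    (h : ∀ i ∈ s, IsReciprocal d (f i) (g i)) :
    IsReciprocal d (∑ i ∈ s, f i) (∑ i ∈ s, g i) := by
  classical
  induction s using Finset.induction_on with
  | empty => simpa using zero d
  | insert a s ha ih =>
    rw [Finset.sum_insert ha, Finset.sum_insert ha]
    exact (h a (Finset.mem_insert_self a s)).add
      (ih fun i hi => h i (Finset.mem_insert_of_mem hi))

theorem symm {d : ℕ} {f g : PowerSeries ℚ} (h : IsReciprocal d f g) : IsReciprocal d g f := by
  obtain ⟨p, hp, hf, hg⟩ := h
  refine ⟨p.reflect d, ?_, hg, by rwa [Polynomial.reflect_reflect]⟩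
  refine Polynomial.natDegree_le_iff_coeff_eq_zero.mpr fun m hm => ?_
  rw [Polynomial.coeff_reflect, Polynomial.revAt_eq_self_of_lt hm]
  exact Polynomial.coeff_eq_zero_of_natDegree_lt (hp.trans_lt hm)

/-- Multiplying a reciprocal pair by `1 / (1 - X)` and `X / (1 - X)` gives a reciprocal pair. -/
theorem X_mul {d : ℕ} {f g : PowerSeries ℚ} (h : IsReciprocal d f g) :
    IsReciprocal (d + 1) (f * PowerSeries.mk 1) (PowerSeries.X * g * PowerSeries.mk 1) := by
  obtain ⟨p, hp, hf, hg⟩ := h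
  have key : ∀ u : PowerSeries ℚ, u * PowerSeries.mk 1 * (1 - PowerSeries.X) ^ (d + 1) =
      u * (1 - PowerSeries.X) ^ d := fun u => by
    rw [pow_succ', mul_assoc, ← mul_assoc (PowerSeries.mk 1),
      PowerSeries.mk_one_mul_one_sub_eq_one, one_mul]
  refine ⟨p, hp.trans d.le_succ, by rw [key, hf], ?_⟩
  have := Polynomial.reflect_mul p 1 hp (Polynomial.natDegree_one.trans_le zero_le_one)
  rw [mul_one, Polynomial.reflect_one, pow_one] at this
  rw [key, this, mul_assoc, hg, Polynomial.coe_mul, Polynomial.coe_X, mul_comm]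

theorem X_pow_mul {d k l : ℕ} (hkl : k + l = 1) {f g : PowerSeries ℚ} (h : IsReciprocal d f g) :
    IsReciprocal (d + 1) (PowerSeries.X ^ k * f * PowerSeries.mk 1)
      (PowerSeries.X ^ l * g * PowerSeries.mk 1) := by
  obtain ⟨rfl, rfl⟩ | ⟨rfl, rfl⟩ : k = 0 ∧ l = 1 ∨ k = 1 ∧ l = 0 := by omega
  · simpa using h.X_mul
  · simpa using h.symm.X_mul.symm

/-- If the coefficients of `f` and `g` are eventually given by polynomials `F` and `G`, then
`G(x) = (-1) ^ (d - 1) F(-x)`. -/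
theorem eval_eq {k : ℕ} {f g : PowerSeries ℚ} (h : IsReciprocal (k + 1) f g) {F G : Polynomial ℚ}
    {N : ℕ} (hF : ∀ n > N, PowerSeries.coeff n f = F.eval (n : ℚ))
    (hG : ∀ n > N, PowerSeries.coeff n g = G.eval (n : ℚ)) (x : ℚ) :
    G.eval x = (-1) ^ k * F.eval (-x) := by
  obtain ⟨p, hp, hf, hg⟩ := h
  have key : ∀ (u : PowerSeries ℚ) (q : Polynomial ℚ), u * (1 - PowerSeries.X) ^ (k + 1) =
      (q : PowerSeries ℚ) →
      u = (q : PowerSeries ℚ) * PowerSeries.invOneSubPow ℚ (k + 1) := fun u q hu => by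
    rw [← hu, ← PowerSeries.invOneSubPow_inv_eq_one_sub_pow, mul_assoc]
    simp
  have hF' := Polynomial.eq_hilbertPoly_of_forall_coeff_eq_eval N
    (fun n hn => (congrArg (PowerSeries.coeff n) (key f p hf)).symm.trans (hF n hn))
  have hG' := Polynomial.eq_hilbertPoly_of_forall_coeff_eq_eval N
    (fun n hn => (congrArg (PowerSeries.coeff n) (key g _ hg)).symm.trans (hG n hn))
  rw [hF', hG', Polynomial.hilbertPoly_reflect_eval p k hp]

end IsReciprocal

open Equiv Matrix Module

theorem Equiv.Perm.permMatrix_apply_eq_ite {ι : Type*} [DecidableEq ι] {R : Type*}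
    [Zero R] [One R] (σ : Perm ι) (i j : ι) : σ.permMatrix R i j = if σ i = j then 1 else 0 := by
  simp [Perm.permMatrix, PEquiv.toMatrix_apply, Equiv.toPEquiv_apply, eq_comm]

section

variable {ι : Type*} [Fintype ι] [DecidableEq ι]

theorem Equiv.Perm.sum_permMatrix_row {R : Type*} [NonAssocSemiring R] (σ : Perm ι) (i : ι) :
    ∑ j, σ.permMatrix R i j = 1 := by
  simp

theorem Equiv.Perm.sum_permMatrix_col {R : Type*} [NonAssocSemiring R] (σ : Perm ι) (j : ι) :
    ∑ i, σ.permMatrix R i j = 1 := by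
  simp [← Equiv.eq_symm_apply]

end

variable {ι : Type*}

namespace Matrix

section

variable [DecidableEq ι]

theorem sub_smul_permMatrix_apply (q : Matrix ι ι ℝ) (σ : Perm ι) (v : ℝ) (i j : ι) :
    (q - v • σ.permMatrix ℝ) i j = if σ i = j then q i j - v else q i j := by
  rw [sub_apply, smul_apply, Perm.permMatrix_apply_eq_ite]
  split_ifs <;> simp

theorem add_smul_permMatrix_apply (σ : Perm ι) (M : Matrix ι ι ℕ) (k : ℕ) (i j : ι) :
    (M + k • σ.permMatrix ℕ) i j = if σ i = j then M i j + k else M i j := by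
  rw [add_apply, smul_apply, Perm.permMatrix_apply_eq_ite]
  split_ifs <;> simp

theorem add_sub_smul_permMatrix {σ : Perm ι} {M : Matrix ι ι ℕ} {k : ℕ}
    (h : ∀ i, k ≤ M i (σ i)) : (M - k • σ.permMatrix ℕ) + k • σ.permMatrix ℕ = M := by
  ext i j
  rw [add_apply, sub_apply, smul_apply, Perm.permMatrix_apply_eq_ite]
  split_ifs with hij
  · subst hij
    have := h i
    simp
    omega
  · simp

end

variable [Fintype ι]

/-- All row sums and column sums of the matrix are equal. -/
def IsSemimagic {R : Type*} [AddCommMonoid R] (M : Matrix ι ι R) : Prop :=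
  ∀ i j, ∑ k, M i k = ∑ k, M k j

/-- The rational matrices with equal line sums that vanish wherever `q` does. -/
def supportSpace (q : Matrix ι ι ℝ) : Submodule ℚ (Matrix ι ι ℚ) where
  carrier := {M | M.IsSemimagic ∧ ∀ i j, q i j = 0 → M i j = 0}
  zero_mem' := ⟨fun i j => by simp, fun i j _ => rfl⟩
  add_mem' {M N} hM hN := ⟨fun i j => by
    simp only [add_apply, Finset.sum_add_distrib, hM.1 i j, hN.1 i j], fun i j h => by
    rw [add_apply, hM.2 i j h, hN.2 i j h, add_zero]⟩
  smul_mem' c M hM := ⟨fun i j => by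
    simp only [smul_apply, ← Finset.smul_sum, hM.1 i j], fun i j h => by
    rw [smul_apply, hM.2 i j h, smul_zero]⟩

theorem mem_supportSpace {q : Matrix ι ι ℝ} {M : Matrix ι ι ℚ} :
    M ∈ supportSpace q ↔ M.IsSemimagic ∧ ∀ i j, q i j = 0 → M i j = 0 := Iff.rfl

theorem supportSpace_neg (q : Matrix ι ι ℝ) : supportSpace (-q) = supportSpace q := by
  ext M
  simp [mem_supportSpace]

/-- Every rational linear functional vanishing at `q` vanishes on `supportSpace q`. -/
def IsGeneric (q : Matrix ι ι ℝ) : Prop :=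
  ∀ l : Matrix ι ι ℚ, ∑ i, ∑ j, (l i j : ℝ) * q i j = 0 →
    ∀ M ∈ supportSpace q, ∑ i, ∑ j, l i j * M i j = 0

theorem IsGeneric.neg {q : Matrix ι ι ℝ} (hq : q.IsGeneric) : (-q).IsGeneric := by
  intro l hl M hM
  rw [supportSpace_neg] at hM
  exact hq l (by simpa using hl) M hM

theorem finrank_supportSpace_zero : finrank ℚ (supportSpace (0 : Matrix ι ι ℝ)) = 0 := by
  have h : supportSpace (0 : Matrix ι ι ℝ) = ⊥ :=
    (Submodule.eq_bot_iff _).mpr fun M hM => Matrix.ext fun i j =>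
      (mem_supportSpace.mp hM).2 i j rfl
  rw [h, finrank_bot]

/-- The natural number matrices `M` supported in the support of `q`, with all line sums equal to
`t - k`, that are positive wherever `q` is negative. -/
def pulledMatrices (q : Matrix ι ι ℝ) (k t : ℕ) : Set (Matrix ι ι ℕ) :=
  {M | ((∀ i, ∑ j, M i j + k = t) ∧ ∀ j, ∑ i, M i j + k = t) ∧
    (∀ i j, q i j = 0 → M i j = 0) ∧ ∀ i j, q i j < 0 → 0 < M i j}

theorem mem_pulledMatrices {q : Matrix ι ι ℝ} {k t : ℕ} {M : Matrix ι ι ℕ} :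
    M ∈ pulledMatrices q k t ↔ ((∀ i, ∑ j, M i j + k = t) ∧ ∀ j, ∑ i, M i j + k = t) ∧
      (∀ i j, q i j = 0 → M i j = 0) ∧ ∀ i j, q i j < 0 → 0 < M i j := Iff.rfl

theorem map_natCast_mem_supportSpace {q : Matrix ι ι ℝ} {k t : ℕ} {M : Matrix ι ι ℕ}
    (hM : M ∈ pulledMatrices q k t) : M.map (Nat.cast : ℕ → ℚ) ∈ supportSpace q := by
  refine ⟨fun i j => ?_, fun i j h => by simp [hM.2.1 i j h]⟩
  have h1 := hM.1.1 i
  have h2 := hM.1.2 j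
  simp only [map_apply]
  exact_mod_cast (by omega : ∑ k, M i k = ∑ k, M k j)

/-- The number of copies of a permutation matrix that is split off along a facet of height `v`: the
smallest natural number allowed at a position where `q` takes the value `v ≠ 0`. -/
noncomputable def pullOrder (v : ℝ) : ℕ := if v < 0 then 1 else 0

theorem pullOrder_le {q : Matrix ι ι ℝ} {k t : ℕ} {M : Matrix ι ι ℕ}
    (hM : M ∈ pulledMatrices q k t) (i j : ι) : pullOrder (q i j) ≤ M i j := by
  unfold pullOrder
  split_ifs with h
  · exact hM.2.2 i j h
  · exact Nat.zero_le _

theorem pullOrder_add_pullOrder_neg {v : ℝ} (hv : v ≠ 0) : pullOrder v + pullOrder (-v) = 1 := by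
  rcases hv.lt_or_gt with h | h <;> simp [pullOrder, h, h.le, not_lt]

theorem exists_isGeneric [Nonempty ι] :
    ∃ q : Matrix ι ι ℝ, q.IsSemimagic ∧ q.IsGeneric ∧ ∀ i j, 0 < q i j := by
  obtain ⟨θ, hθ⟩ : ∃ θ : ℝ, Transcendental ℚ θ := by
    have := transcendental_liouvilleNumber le_rfl
    exact ⟨_, fun h => this ((IsFractionRing.isAlgebraic_iff ℤ ℚ ℝ).mpr h)⟩
  let W : Submodule ℚ (Matrix ι ι ℚ) := supportSpace (Matrix.of fun _ _ => 1)
  let b := Module.finBasis ℚ W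
  let r : Matrix ι ι ℝ := Matrix.of fun i j => ∑ k, θ ^ (k.val + 1) * ((b k).1 i j : ℝ)
  obtain ⟨N, hN⟩ := exists_nat_gt (∑ i, ∑ j, |r i j|)
  have hpos : ∀ i j, 0 < N + r i j := fun i j => by
    have h1 : |r i j| ≤ ∑ j, |r i j| :=
      Finset.single_le_sum (f := fun j => |r i j|) (fun _ _ => abs_nonneg _) (Finset.mem_univ j)
    have h2 : ∑ j, |r i j| ≤ ∑ i, ∑ j, |r i j| :=
      Finset.single_le_sum (f := fun i => ∑ j, |r i j|)
        (fun _ _ => Finset.sum_nonneg fun _ _ => abs_nonneg _) (Finset.mem_univ i)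
    have h3 := neg_abs_le (r i j)
    linarith
  refine ⟨Matrix.of fun i j => N + r i j, fun i j => ?_, fun l hl M hM => ?_, hpos⟩
  · simp only [of_apply, Finset.sum_add_distrib, r]
    rw [Finset.sum_comm, Finset.sum_comm (s := Finset.univ (α := ι)) (t := Finset.univ)
      (f := fun i k => θ ^ (k.val + 1) * ((b k).1 i j : ℝ))]
    simp only [← Finset.mul_sum]
    congr 1
    refine Finset.sum_congr rfl fun k _ => ?_
    congr 1
    exact_mod_cast (b k).2.1 i j
  · let φ : Matrix ι ι ℚ →ₗ[ℚ] ℚ := ∑ i, ∑ j, l i j • Matrix.entryLinearMap ℚ ℚ i j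
    have hφ : ∀ M : Matrix ι ι ℚ, φ M = ∑ i, ∑ j, l i j * M i j := fun M => by simp [φ]
    have hb : ∀ k, φ (b k) = 0 := by
      let p : Polynomial ℚ := Polynomial.C (N * ∑ i, ∑ j, l i j) +
        ∑ k, Polynomial.C (φ (b k)) * Polynomial.X ^ (k.val + 1)
      have hp : p = 0 := by
        refine (transcendental_iff.mp hθ) p ?_
        rw [← hl]
        simp only [p, hφ, map_add, map_sum, map_mul, map_pow, Polynomial.aeval_C,
          Polynomial.aeval_X, eq_ratCast, of_apply, r, mul_add,
          Finset.sum_add_distrib, Finset.mul_sum, Finset.sum_mul, Rat.cast_natCast]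
        congr 1
        · simp only [mul_comm]
        · rw [Finset.sum_comm]
          refine Finset.sum_congr rfl fun i _ => ?_
          rw [Finset.sum_comm]
          refine Finset.sum_congr rfl fun j _ => Finset.sum_congr rfl fun k _ => ?_
          ring
      intro k
      have := congrArg (Polynomial.coeff · (k.val + 1)) hp
      simpa [p, Polynomial.coeff_C, Polynomial.coeff_X_pow, Fin.val_inj] using this
    have hMW : M ∈ W := ⟨hM.1, fun i j h => absurd h (by simp)⟩
    have : φ ∘ₗ W.subtype = 0 := b.ext fun k => hb k
    rw [← hφ]
    exact LinearMap.congr_fun this ⟨M, hMW⟩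

theorem ncard_pulledMatrices_of_pos {q : Matrix ι ι ℝ} (hq : ∀ i j, 0 < q i j) (t : ℕ) :
    (pulledMatrices q 0 t).ncard = Nat.card {M : Matrix ι ι ℕ //
      (∀ i, ∑ j, M i j = t) ∧ (∀ j, ∑ i, M i j = t)} := by
  rw [← Nat.card_coe_set_eq]
  refine Nat.card_congr (Equiv.subtypeEquivRight fun M => ?_)
  rw [mem_pulledMatrices]
  simp [(hq _ _).ne', (hq _ _).not_gt]

theorem ncard_pulledMatrices_neg_of_pos {q : Matrix ι ι ℝ} (hq : ∀ i j, 0 < q i j) (t : ℕ) :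
    (pulledMatrices (-q) 0 (t + Fintype.card ι)).ncard = (pulledMatrices q 0 t).ncard := by
  have h : pulledMatrices (-q) 0 (t + Fintype.card ι) =
      (· + Matrix.of fun _ _ => 1) '' pulledMatrices q 0 t := by
    ext M
    constructor
    · intro hM
      have heq : (M - Matrix.of fun _ _ => 1) + Matrix.of (fun _ _ => 1) = M := by
        ext i j
        have := hM.2.2 i j (neg_neg_of_pos (hq i j))
        simp only [add_apply, sub_apply, of_apply]
        omega
      refine ⟨_, ⟨?_, fun i j h => absurd h (hq i j).ne', fun i j h => absurd h (hq i j).not_gt⟩,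
        heq⟩
      have h1 := hM.1
      rw [← heq] at h1
      simpa [Finset.sum_add_distrib] using h1
    · rintro ⟨M, hM, rfl⟩
      refine ⟨?_, fun i j h => absurd h (neg_ne_zero.mpr (hq i j).ne'), fun i j _ => by simp⟩
      simpa [Finset.sum_add_distrib] using hM.1
  rw [h, Set.ncard_image_of_injective _ (add_left_injective _)]

/-- The generating function of `pulledMatrices q 0`. -/
noncomputable def pulledSeries (q : Matrix ι ι ℝ) : PowerSeries ℚ :=
  PowerSeries.mk fun t => ((pulledMatrices q 0 t).ncard : ℚ)

theorem mk_ncard_pulledMatrices [Nonempty ι] (q : Matrix ι ι ℝ) (k : ℕ) :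
    (PowerSeries.mk fun t => ((pulledMatrices q k t).ncard : ℚ)) =
      PowerSeries.X ^ k * pulledSeries q := by
  ext t
  rw [PowerSeries.coeff_X_pow_mul', PowerSeries.coeff_mk, pulledSeries, PowerSeries.coeff_mk]
  split_ifs with h
  · congr 2
    ext M
    have : ∀ s : ℕ, s + k = t ↔ s + 0 = t - k := fun s => by omega
    simp only [mem_pulledMatrices, this]
  · rw [Set.eq_empty_of_forall_notMem (s := pulledMatrices q k t), Set.ncard_empty, Nat.cast_zero]
    intro M hM
    have := hM.1.1 (Classical.arbitrary ι)
    omega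

theorem pulledSeries_zero [Nonempty ι] : pulledSeries (0 : Matrix ι ι ℝ) = 1 := by
  ext t
  rw [pulledSeries, PowerSeries.coeff_mk, PowerSeries.coeff_one]
  have hM : ∀ M ∈ pulledMatrices (0 : Matrix ι ι ℝ) 0 t, M = 0 :=
    fun M hM => Matrix.ext fun i j => hM.2.1 i j rfl
  split_ifs with ht
  · subst ht
    rw [Set.ncard_eq_one.mpr ⟨0, Set.eq_singleton_iff_unique_mem.mpr ⟨?_, hM⟩⟩, Nat.cast_one]
    simp [mem_pulledMatrices]
  · rw [Set.eq_empty_of_forall_notMem (s := pulledMatrices _ _ _), Set.ncard_empty, Nat.cast_zero]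
    intro M h
    have := h.1.1 (Classical.arbitrary ι)
    rw [hM M h] at this
    exact ht (by simpa using this.symm)

/-- A matrix with equal line sums is determined by its minor away from the first row and column
together with its line sum. -/
def semimagicEquiv {m : ℕ} {q : Matrix (Fin (m + 1)) (Fin (m + 1)) ℝ} (hq : ∀ i j, q i j ≠ 0) :
    supportSpace q ≃ₗ[ℚ] Matrix (Fin m) (Fin m) ℚ × ℚ where
  toFun M := (M.1.submatrix Fin.succ Fin.succ, ∑ k, M.1 0 k)
  map_add' M N := by simp [Finset.sum_add_distrib]; rfl
  map_smul' c M := by simp [Finset.mul_sum]; rfl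
  invFun B := ⟨Matrix.of (Fin.cons
      (Fin.cons (B.2 - ∑ j, (B.2 - ∑ i, B.1 i j)) fun j => B.2 - ∑ i, B.1 i j)
      fun i => Fin.cons (B.2 - ∑ j, B.1 i j) (B.1 i)), by
    refine ⟨fun i j => ?_, fun i j h => absurd h (hq i j)⟩
    refine Eq.trans (b := B.2) ?_ (Eq.symm ?_)
    · cases i using Fin.cases <;> simp [Fin.sum_univ_succ]
    · cases j using Fin.cases
      · have := Finset.sum_comm (s := Finset.univ) (t := Finset.univ) (f := fun i j => B.1 i j)
        simp [Fin.sum_univ_succ, this]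
      · simp [Fin.sum_univ_succ]⟩
  left_inv M := by
    have h := (mem_supportSpace.mp M.2).1
    ext i j
    have hrow : ∀ i, ∑ k, M.1 i k = ∑ k, M.1 0 k := fun i => (h i 0).trans (h 0 0).symm
    have hcol : ∀ j, ∑ k, M.1 k j = ∑ k, M.1 0 k := fun j => (h 0 j).symm
    have h0 : ∀ j : Fin m, ∑ k, M.1 0 k - ∑ i : Fin m, M.1 i.succ j.succ = M.1 0 j.succ :=
      fun j => by rw [← hcol j.succ, Fin.sum_univ_succ, add_sub_cancel_right]
    cases i using Fin.cases with
    | zero =>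
      cases j using Fin.cases with
      | zero =>
        simp only [of_apply, Fin.cons_zero, submatrix_apply, h0]
        rw [Fin.sum_univ_succ, add_sub_cancel_right]
      | succ j => simpa using h0 j
    | succ i =>
      cases j using Fin.cases with
      | zero =>
        simp only [of_apply, Fin.cons_zero, Fin.cons_succ, submatrix_apply]
        rw [← hrow i.succ, Fin.sum_univ_succ, add_sub_cancel_right]
      | succ j => simp
  right_inv B := by
    ext <;> simp [Fin.sum_univ_succ]

theorem finrank_supportSpace_of_ne_zero {m : ℕ} {q : Matrix (Fin (m + 1)) (Fin (m + 1)) ℝ}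
    (hq : ∀ i j, q i j ≠ 0) : finrank ℚ (supportSpace q) = m * m + 1 := by
  rw [(semimagicEquiv hq).finrank_eq]
  simp [finrank_matrix]

variable [DecidableEq ι]

theorem IsSemimagic.exists_perm_ne_zero {M : Matrix ι ι ℝ} (hM : M.IsSemimagic)
    (h0 : ∀ i j, 0 ≤ M i j) (hne : M ≠ 0) : ∃ σ : Perm ι, ∀ i, M i (σ i) ≠ 0 := by
  obtain ⟨a, b, hab⟩ : ∃ a b, M a b ≠ 0 := by
    by_contra! h
    exact hne (Matrix.ext h)
  set c := ∑ k, M a k with hc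
  have hc0 : 0 < c :=
    Finset.sum_pos' (fun k _ => h0 a k) ⟨b, Finset.mem_univ b, (h0 a b).lt_of_ne' hab⟩
  have hcol : ∀ j, ∑ i, M i j = c := fun j => (hM a j).symm
  have hrow : ∀ i, ∑ j, M i j = c := fun i => (hM i b).trans (hcol b)
  have hD : c⁻¹ • M ∈ doublyStochastic ℝ ι := by
    rw [mem_doublyStochastic_iff_sum]
    refine ⟨fun i j => mul_nonneg (inv_nonneg.mpr hc0.le) (h0 i j), fun i => ?_, fun j => ?_⟩
    · simp only [smul_apply, smul_eq_mul, ← Finset.mul_sum, hrow, inv_mul_cancel₀ hc0.ne']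
    · simp only [smul_apply, smul_eq_mul, ← Finset.mul_sum, hcol, inv_mul_cancel₀ hc0.ne']
  obtain ⟨w, hw0, hw1, hw⟩ := exists_eq_sum_perm_of_mem_doublyStochastic hD
  obtain ⟨σ, -, hσ⟩ := Finset.exists_ne_zero_of_sum_ne_zero (hw1.trans_ne one_ne_zero)
  refine ⟨σ, fun i hi => hσ ?_⟩
  have h := congrFun (congrFun hw i) (σ i)
  rw [smul_apply, hi, smul_zero, Matrix.sum_apply, Finset.sum_eq_zero_iff_of_nonneg] at h
  · simpa [Perm.permMatrix_apply_eq_ite] using h σ (Finset.mem_univ σ)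
  · intro τ _
    rw [smul_apply, Perm.permMatrix_apply_eq_ite, smul_eq_mul]
    exact mul_nonneg (hw0 τ) (by split_ifs <;> norm_num)

theorem permMatrix_mem_supportSpace {q : Matrix ι ι ℝ} {σ : Perm ι} (hσ : ∀ i, q i (σ i) ≠ 0) :
    σ.permMatrix ℚ ∈ supportSpace q := by
  refine ⟨fun i j => by rw [σ.sum_permMatrix_row, σ.sum_permMatrix_col], fun i j h => ?_⟩
  rw [Perm.permMatrix_apply_eq_ite, if_neg]
  rintro rfl
  exact hσ i h

theorem IsGeneric.apply_eq {q : Matrix ι ι ℝ} (hq : q.IsGeneric) {a b c d : ι}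
    (h : q a b = q c d) {M : Matrix ι ι ℚ} (hM : M ∈ supportSpace q) : M a b = M c d := by
  have key : ∀ {R : Type} [CommRing R] (e f : ι) (N : Matrix ι ι R),
      ∑ i, ∑ j, Matrix.single e f (1 : R) i j * N i j = N e f := by
    intro R _ e f N
    simp [single_apply, ite_and]
  have := hq (single a b 1 - single c d 1) ?_ M hM
  · simpa [sub_mul, Finset.sum_sub_distrib, key, sub_eq_zero] using this
  · have hcast : ∀ e f i j : ι, ((single e f (1 : ℚ) i j : ℚ) : ℝ) = single e f (1 : ℝ) i j := by
      intro e f i j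
      simp only [single_apply]
      split_ifs <;> simp
    simp [sub_mul, Finset.sum_sub_distrib, hcast, key, h]

theorem IsSemimagic.sub_smul_permMatrix {q : Matrix ι ι ℝ} (hq : q.IsSemimagic) (σ : Perm ι)
    (v : ℝ) : (q - v • σ.permMatrix ℝ).IsSemimagic := by
  intro i j
  simp only [sub_apply, smul_apply, Finset.sum_sub_distrib, ← Finset.smul_sum,
    σ.sum_permMatrix_row, σ.sum_permMatrix_col, hq i j]

section Pulling

variable {q : Matrix ι ι ℝ} {σ : Perm ι} {a : ι}

theorem mem_supportSpace_sub (hg : q.IsGeneric) (hσ : ∀ i, q i (σ i) ≠ 0) {M : Matrix ι ι ℚ} :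
    M ∈ supportSpace (q - q a (σ a) • σ.permMatrix ℝ) ↔ M ∈ supportSpace q ∧ M a (σ a) = 0 := by
  constructor
  · intro hM
    refine ⟨⟨hM.1, fun i j hij => hM.2 i j ?_⟩, hM.2 a (σ a) ?_⟩
    · rw [sub_smul_permMatrix_apply, if_neg, hij]
      rintro rfl
      exact hσ i hij
    · rw [sub_smul_permMatrix_apply, if_pos rfl, sub_self]
  · rintro ⟨hM, ha⟩
    refine ⟨hM.1, fun i j hij => ?_⟩
    rw [sub_smul_permMatrix_apply] at hij
    split_ifs at hij with h
    · subst h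
      rw [hg.apply_eq (sub_eq_zero.mp hij) hM, ha]
    · exact hM.2 i j hij

theorem IsGeneric.sub_smul_permMatrix (hg : q.IsGeneric) (hσ : ∀ i, q i (σ i) ≠ 0) :
    (q - q a (σ a) • σ.permMatrix ℝ).IsGeneric := by
  intro l hl M hM
  obtain ⟨hM, ha⟩ := (mem_supportSpace_sub hg hσ).mp hM
  set s : ℚ := ∑ i, l i (σ i) with hs
  have key := hg (l - single a (σ a) s) ?_ M hM
  · simpa [sub_mul, Finset.sum_sub_distrib, single_apply, ite_and, ha] using key
  · have hcast : ∀ i j : ι, ((single a (σ a) s i j : ℚ) : ℝ) = single a (σ a) (s : ℝ) i j := by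
      intro i j
      simp only [single_apply]
      split_ifs <;> simp
    simp only [sub_apply, smul_apply, mul_sub, Finset.sum_sub_distrib,
      Perm.permMatrix_apply_eq_ite] at hl
    simp only [sub_apply, Rat.cast_sub, sub_mul, Finset.sum_sub_distrib, hcast]
    simp only [smul_eq_mul, mul_ite, mul_one, mul_zero, Finset.sum_ite_eq, Finset.mem_univ,
      if_true, ← Finset.sum_mul] at hl
    simpa [single_apply, ite_and, hs] using hl

theorem finrank_supportSpace_sub (hg : q.IsGeneric) (hσ : ∀ i, q i (σ i) ≠ 0) :
    finrank ℚ (supportSpace q) =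
      finrank ℚ (supportSpace (q - q a (σ a) • σ.permMatrix ℝ)) + 1 := by
  let φ : Module.Dual ℚ (supportSpace q) :=
    (Matrix.entryLinearMap ℚ ℚ a (σ a)).comp (supportSpace q).subtype
  have hφ : φ ≠ 0 := fun h => by
    have := LinearMap.congr_fun h ⟨_, permMatrix_mem_supportSpace hσ⟩
    simp [φ] at this
  have hker : (LinearMap.ker φ).map (supportSpace q).subtype =
      supportSpace (q - q a (σ a) • σ.permMatrix ℝ) := by
    ext M
    rw [mem_supportSpace_sub hg hσ]
    simp [φ, Submodule.mem_map, and_comm]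
  rw [← hker, ← Module.Dual.finrank_ker_add_one_of_ne_zero hφ,
    (Submodule.equivMapOfInjective _ (supportSpace q).injective_subtype _).finrank_eq]

end Pulling

theorem finite_pulledMatrices (q : Matrix ι ι ℝ) (k t : ℕ) : (pulledMatrices q k t).Finite := by
  refine Set.Finite.subset (Set.finite_Iic (fun _ _ => t : ι → ι → ℕ)) fun M hM i j => ?_
  have h1 := hM.1.1 i
  have h2 := Finset.single_le_sum (f := fun j => M i j) (fun _ _ => Nat.zero_le _)
    (Finset.mem_univ j)
  simp only at h2 ⊢
  omega

theorem sum_add_smul_permMatrix_iff (σ : Perm ι) (M : Matrix ι ι ℕ) (k t : ℕ) :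
    ((∀ i, ∑ j, (M + k • σ.permMatrix ℕ) i j + 0 = t) ∧
      ∀ j, ∑ i, (M + k • σ.permMatrix ℕ) i j + 0 = t) ↔
    (∀ i, ∑ j, M i j + k = t) ∧ ∀ j, ∑ i, M i j + k = t := by
  simp only [add_apply, smul_apply, smul_eq_mul, Finset.sum_add_distrib, ← Finset.mul_sum,
    σ.sum_permMatrix_row, σ.sum_permMatrix_col, mul_one, add_zero]

section Recursion

variable {q : Matrix ι ι ℝ} {σ : Perm ι} {t : ℕ}

theorem add_permMatrix_mem_pulledMatrices (hσ : ∀ i, q i (σ i) ≠ 0) {M : Matrix ι ι ℕ} :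
    M + (1 : ℕ) • σ.permMatrix ℕ ∈ pulledMatrices q 0 t ∧
      (∀ i, q i (σ i) < 0 → 2 ≤ (M + (1 : ℕ) • σ.permMatrix ℕ) i (σ i)) ↔
    M ∈ pulledMatrices q 1 t := by
  rw [mem_pulledMatrices, mem_pulledMatrices, sum_add_smul_permMatrix_iff]
  simp only [add_smul_permMatrix_apply, if_true]
  constructor
  · rintro ⟨⟨h1, h2, h3⟩, h4⟩
    refine ⟨h1, fun i j h => ?_, fun i j h => ?_⟩
    · have := h2 i j h
      split_ifs at this
      exact this
    · by_cases hij : σ i = j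
      · subst hij
        have := h4 i h
        omega
      · simpa [hij] using h3 i j h
  · rintro ⟨h1, h2, h3⟩
    refine ⟨⟨h1, fun i j h => ?_, fun i j h => ?_⟩, fun i h => ?_⟩
    · rw [if_neg]
      · exact h2 i j h
      · rintro rfl
        exact hσ i h
    · have := h3 i j h
      split_ifs <;> omega
    · have := h3 i (σ i) h
      omega

theorem add_smul_permMatrix_mem_pulledMatrices (hσ : ∀ i, q i (σ i) ≠ 0) {a : ι}
    {M : Matrix ι ι ℕ}
    (hM : M ∈ pulledMatrices (q - q a (σ a) • σ.permMatrix ℝ) (pullOrder (q a (σ a))) t) :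
    M + pullOrder (q a (σ a)) • σ.permMatrix ℕ ∈ pulledMatrices q 0 t := by
  obtain ⟨h1, h2, h3⟩ := hM
  simp only [sub_smul_permMatrix_apply] at h2 h3
  refine ⟨(sum_add_smul_permMatrix_iff σ M _ t).mpr h1, fun i j h => ?_, fun i j h => ?_⟩
  · have hij : σ i ≠ j := by
      rintro rfl
      exact hσ i h
    rw [add_smul_permMatrix_apply, if_neg hij]
    exact h2 i j (by simpa [hij] using h)
  · rw [add_smul_permMatrix_apply]
    split_ifs with hij
    · subst hij
      unfold pullOrder
      split_ifs with ha
      · omega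
      · exact h3 i (σ i) (by simp only [if_true]; linarith [not_lt.mp ha])
    · exact h3 i j (by simpa [hij] using h)

theorem pulledMatrices_subset [Nonempty ι] (hg : q.IsGeneric) (hσ : ∀ i, q i (σ i) ≠ 0)
    {M : Matrix ι ι ℕ} (hM : M ∈ pulledMatrices q 0 t) :
    (∃ M' ∈ pulledMatrices q 1 t, M' + (1 : ℕ) • σ.permMatrix ℕ = M) ∨
    ∃ a, ∃ M' ∈ pulledMatrices (q - q a (σ a) • σ.permMatrix ℝ) (pullOrder (q a (σ a))) t,
      M' + pullOrder (q a (σ a)) • σ.permMatrix ℕ = M := by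
  obtain ⟨a, -, ha⟩ := Finset.exists_min_image Finset.univ
    (fun i => toLex (M i (σ i), q i (σ i))) Finset.univ_nonempty
  replace ha : ∀ i, M a (σ a) < M i (σ i) ∨ M a (σ a) = M i (σ i) ∧ q a (σ a) ≤ q i (σ i) :=
    fun i => Prod.Lex.toLex_le_toLex.mp (ha i (Finset.mem_univ i))
  have hk := pullOrder_le hM a (σ a)
  rcases hk.eq_or_lt with hk | hk
  · right
    have hle : ∀ i, pullOrder (q a (σ a)) ≤ M i (σ i) := fun i => by
      rw [hk]
      rcases ha i with h | h
      · exact h.le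
      · exact h.1.le
    have heq := add_sub_smul_permMatrix hle
    refine ⟨a, _, ⟨?_, fun i j hij => ?_, fun i j hij => ?_⟩, heq⟩
    · rw [← sum_add_smul_permMatrix_iff σ, heq]
      exact hM.1
    all_goals
      rw [sub_smul_permMatrix_apply] at hij
      rw [sub_apply, smul_apply, Perm.permMatrix_apply_eq_ite]
      split_ifs at hij ⊢ with h
    · subst h
      have := hg.apply_eq (sub_eq_zero.mp hij) (map_natCast_mem_supportSpace hM)
      simp only [map_apply, Nat.cast_inj] at this
      simp [this, hk]
    · simpa using hM.2.1 i j hij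
    · subst h
      rcases ha i with h | h
      · simp
        omega
      · linarith [h.2]
    · simpa using hM.2.2 i j hij
  · left
    have hle : ∀ i, 1 ≤ M i (σ i) := fun i => by
      rcases ha i with h | h <;> omega
    have heq := add_sub_smul_permMatrix hle
    refine ⟨_, (add_permMatrix_mem_pulledMatrices hσ).mp ⟨?_, ?_⟩, heq⟩
    · rwa [heq]
    · rw [heq]
      intro i hi
      unfold pullOrder at hk
      split_ifs at hk with hq
      · rcases ha i with h | h <;> omega
      · rcases ha i with h | h
        · omega
        · linarith [h.2]

theorem apply_eq_pullOrder {a i : ι} (hi : q i (σ i) = q a (σ a)) {M : Matrix ι ι ℕ}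
    (hM : M ∈ pulledMatrices (q - q a (σ a) • σ.permMatrix ℝ) (pullOrder (q a (σ a))) t) :
    (M + pullOrder (q a (σ a)) • σ.permMatrix ℕ) i (σ i) = pullOrder (q a (σ a)) := by
  have := hM.2.1 i (σ i) (by simp [hi])
  rw [add_smul_permMatrix_apply, if_pos rfl, this, zero_add]

theorem value_le_of_add_eq {a b : ι} {M N : Matrix ι ι ℕ}
    (hM : M ∈ pulledMatrices (q - q a (σ a) • σ.permMatrix ℝ) (pullOrder (q a (σ a))) t)
    (hN : N ∈ pulledMatrices (q - q b (σ b) • σ.permMatrix ℝ) (pullOrder (q b (σ b))) t)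
    (h : M + pullOrder (q a (σ a)) • σ.permMatrix ℕ =
      N + pullOrder (q b (σ b)) • σ.permMatrix ℕ) : q b (σ b) ≤ q a (σ a) := by
  have hMa := apply_eq_pullOrder rfl hM
  have hNb := apply_eq_pullOrder rfl hN
  by_contra! hlt
  have := hN.2.2 a (σ a) (by rw [sub_smul_permMatrix_apply, if_pos rfl]; linarith)
  rw [h, add_smul_permMatrix_apply, if_pos rfl] at hMa
  rw [← h, add_smul_permMatrix_apply, if_pos rfl] at hNb
  omega

/-- Every matrix in `pulledMatrices q` is a multiple of a permutation matrix plus a matrix in a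
unique facet not containing that permutation matrix. -/
theorem ncard_pulledMatrices [Nonempty ι] (hg : q.IsGeneric) (hσ : ∀ i, q i (σ i) ≠ 0) (t : ℕ) :
    (pulledMatrices q 0 t).ncard = (pulledMatrices q 1 t).ncard +
      ∑ v ∈ Finset.univ.image (fun i => q i (σ i)),
        (pulledMatrices (q - v • σ.permMatrix ℝ) (pullOrder v) t).ncard := by
  set V := Finset.univ.image (fun i => q i (σ i)) with hV
  have hVmem : ∀ v ∈ V, ∃ a, q a (σ a) = v := fun v hv => by simpa [hV] using hv
  set B : ℝ → Set (Matrix ι ι ℕ) := fun v => (· + pullOrder v • σ.permMatrix ℕ) ''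
    pulledMatrices (q - v • σ.permMatrix ℝ) (pullOrder v) t with hB
  have hunion : pulledMatrices q 0 t =
      (· + (1 : ℕ) • σ.permMatrix ℕ) '' pulledMatrices q 1 t ∪ ⋃ v ∈ (V : Set ℝ), B v := by
    ext M
    constructor
    · intro hM
      rcases pulledMatrices_subset hg hσ hM with ⟨M', hM', rfl⟩ | ⟨a, M', hM', rfl⟩
      · exact Or.inl ⟨M', hM', rfl⟩
      · exact Or.inr (Set.mem_biUnion (x := q a (σ a)) (by simp [hV]) ⟨M', hM', rfl⟩)
    · rintro (⟨M', hM', rfl⟩ | hM)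
      · exact ((add_permMatrix_mem_pulledMatrices hσ).mpr hM').1
      · obtain ⟨v, hv, M', hM', rfl⟩ := Set.mem_iUnion₂.mp hM
        obtain ⟨a, rfl⟩ := hVmem v hv
        exact add_smul_permMatrix_mem_pulledMatrices hσ hM'
  have hdisj : Disjoint ((· + (1 : ℕ) • σ.permMatrix ℕ) '' pulledMatrices q 1 t)
      (⋃ v ∈ (V : Set ℝ), B v) := by
    rw [Set.disjoint_left]
    rintro _ ⟨M, hM, rfl⟩ hM'
    obtain ⟨v, hv, M', hM', heq⟩ := Set.mem_iUnion₂.mp hM'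
    obtain ⟨a, rfl⟩ := hVmem v hv
    have h2 := ((add_permMatrix_mem_pulledMatrices hσ).mpr hM).2 a
    have h3 := apply_eq_pullOrder rfl hM'
    simp only at heq
    rw [heq] at h3
    have h4 : (M + (1 : ℕ) • σ.permMatrix ℕ) a (σ a) = M a (σ a) + 1 := by
      rw [add_smul_permMatrix_apply, if_pos rfl]
    unfold pullOrder at h3
    split_ifs at h3 with ha
    · have := h2 ha
      omega
    · omega
  have hpair : (V : Set ℝ).PairwiseDisjoint B := by
    intro v hv w hw hvw
    obtain ⟨a, rfl⟩ := hVmem v hv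
    obtain ⟨b, rfl⟩ := hVmem w hw
    refine Set.disjoint_left.mpr ?_
    rintro _ ⟨M, hM, rfl⟩ ⟨N, hN, hNM⟩
    exact hvw (le_antisymm (value_le_of_add_eq hN hM hNM) (value_le_of_add_eq hM hN hNM.symm))
  have hBfin : ∀ v ∈ (V : Set ℝ), (B v).Finite := fun v _ => (finite_pulledMatrices _ _ _).image _
  rw [hunion, Set.ncard_union_eq hdisj ((finite_pulledMatrices _ _ _).image _)
    (V.finite_toSet.biUnion hBfin), Set.ncard_image_of_injective _ (add_left_injective _),
    V.finite_toSet.ncard_biUnion hBfin hpair, finsum_mem_coe_finset]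
  simp only [hB, Set.ncard_image_of_injective _ (add_left_injective _)]

end Recursion

theorem pulledSeries_eq_sum [Nonempty ι] {q : Matrix ι ι ℝ} {σ : Perm ι} (hg : q.IsGeneric)
    (hσ : ∀ i, q i (σ i) ≠ 0) :
    pulledSeries q = ∑ v ∈ Finset.univ.image (fun i => q i (σ i)),
      PowerSeries.X ^ pullOrder v * pulledSeries (q - v • σ.permMatrix ℝ) * PowerSeries.mk 1 := by
  have h : pulledSeries q = PowerSeries.X * pulledSeries q +
      ∑ v ∈ Finset.univ.image (fun i => q i (σ i)),
        PowerSeries.X ^ pullOrder v * pulledSeries (q - v • σ.permMatrix ℝ) := by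
    have hX := mk_ncard_pulledMatrices q 1
    rw [pow_one] at hX
    simp only [← hX, ← mk_ncard_pulledMatrices]
    ext t
    simp only [pulledSeries, map_add, map_sum, PowerSeries.coeff_mk]
    exact_mod_cast ncard_pulledMatrices hg hσ t
  have h1 : pulledSeries q * (1 - PowerSeries.X) =
      ∑ v ∈ Finset.univ.image (fun i => q i (σ i)),
        PowerSeries.X ^ pullOrder v * pulledSeries (q - v • σ.permMatrix ℝ) := by
    rw [mul_sub, mul_one, mul_comm, sub_eq_iff_eq_add']
    exact h
  rw [← Finset.sum_mul, ← h1, mul_assoc, mul_comm (1 - PowerSeries.X),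
    PowerSeries.mk_one_mul_one_sub_eq_one, mul_one]

theorem pulledSeries_neg_eq_sum [Nonempty ι] {q : Matrix ι ι ℝ} {σ : Perm ι} (hg : q.IsGeneric)
    (hσ : ∀ i, q i (σ i) ≠ 0) :
    pulledSeries (-q) = ∑ v ∈ Finset.univ.image (fun i => q i (σ i)),
      PowerSeries.X ^ pullOrder (-v) * pulledSeries (-(q - v • σ.permMatrix ℝ)) *
        PowerSeries.mk 1 := by
  have himage : Finset.univ.image (fun i => (-q) i (σ i)) =
      (Finset.univ.image (fun i => q i (σ i))).image Neg.neg := by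
    rw [Finset.image_image]
    rfl
  rw [pulledSeries_eq_sum hg.neg (σ := σ) (fun i => neg_ne_zero.mpr (hσ i)), himage,
    Finset.sum_image neg_injective.injOn]
  refine Finset.sum_congr rfl fun v _ => ?_
  rw [neg_smul, neg_sub_neg, neg_sub]

theorem pulledMatrices_eq_empty [Nonempty ι] {q : Matrix ι ι ℝ} (hq : q.IsSemimagic)
    (h0 : q ≠ 0) (hσ : ¬ ∃ σ : Perm ι, ∀ i, q i (σ i) ≠ 0) (k t : ℕ) :
    pulledMatrices q k t = ∅ := by
  refine Set.eq_empty_of_forall_notMem fun M hM => ?_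
  by_cases hM0 : M = 0
  · have hnn : ∀ i j, 0 ≤ q i j := fun i j => by
      by_contra! hneg
      simpa [hM0] using hM.2.2 i j hneg
    exact hσ (hq.exists_perm_ne_zero hnn h0)
  · have hsm : (M.map (Nat.cast : ℕ → ℝ)).IsSemimagic := fun i j => by
      have h1 := hM.1.1 i
      have h2 := hM.1.2 j
      simp only [map_apply]
      exact_mod_cast (by omega : ∑ k, M i k = ∑ k, M k j)
    have hne : M.map (Nat.cast : ℕ → ℝ) ≠ 0 := fun h => hM0 (by
      ext i j
      simpa using congrFun (congrFun h i) j)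
    obtain ⟨σ, h⟩ := hsm.exists_perm_ne_zero (fun i j => by simp) hne
    exact hσ ⟨σ, fun i hi => h i (by simp [hM.2.1 i _ hi])⟩

theorem isReciprocal_of_not_exists_perm [Nonempty ι] {q : Matrix ι ι ℝ} (hq : q.IsSemimagic)
    (hσ : ¬ ∃ σ : Perm ι, ∀ i, q i (σ i) ≠ 0) {d : ℕ} (hd : q = 0 → d = 0) :
    IsReciprocal d (pulledSeries q) (pulledSeries (-q)) := by
  by_cases h0 : q = 0
  · rw [hd h0, h0, neg_zero, pulledSeries_zero]
    exact IsReciprocal.one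
  · have hq' : (-q).IsSemimagic := fun i j => by
      simp only [neg_apply, Finset.sum_neg_distrib, hq i j]
    have hz : pulledSeries q = 0 := by
      ext t
      simp [pulledSeries, pulledMatrices_eq_empty hq h0 hσ]
    have hz' : pulledSeries (-q) = 0 := by
      ext t
      simp [pulledSeries, pulledMatrices_eq_empty hq' (neg_ne_zero.mpr h0) (by simpa using hσ)]
    rw [hz, hz']
    exact IsReciprocal.zero d

theorem isReciprocal_pulledSeries [Nonempty ι] {q : Matrix ι ι ℝ} (hq : q.IsSemimagic)
    (hg : q.IsGeneric) :
    IsReciprocal (finrank ℚ (supportSpace q)) (pulledSeries q) (pulledSeries (-q)) := by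
  induction hd : finrank ℚ (supportSpace q) generalizing q with
  | zero =>
    have hσ : ¬ ∃ σ : Perm ι, ∀ i, q i (σ i) ≠ 0 := by
      rintro ⟨σ, hσ⟩
      have := finrank_supportSpace_sub hg hσ (a := Classical.arbitrary ι)
      omega
    exact isReciprocal_of_not_exists_perm hq hσ fun _ => rfl
  | succ d ih =>
    by_cases hσ : ∃ σ : Perm ι, ∀ i, q i (σ i) ≠ 0
    · obtain ⟨σ, hσ⟩ := hσ
      rw [pulledSeries_eq_sum hg hσ, pulledSeries_neg_eq_sum hg hσ]
      refine IsReciprocal.sum _ fun v hv => ?_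
      obtain ⟨a, -, rfl⟩ := Finset.mem_image.mp hv
      refine (ih (hq.sub_smul_permMatrix σ _) (hg.sub_smul_permMatrix hσ) ?_).X_pow_mul
        (pullOrder_add_pullOrder_neg (hσ a))
      have := finrank_supportSpace_sub hg hσ (a := a)
      omega
    · refine isReciprocal_of_not_exists_perm hq hσ ?_
      rintro rfl
      rw [← hd, finrank_supportSpace_zero]

end Matrix

/-- If `H` is the Ehrhart polynomial of the `n`-th Birkhoff polytope (i.e. the
polynomial counting semi-magic squares of size `n` and line sum `t` for
positive integers `t`), then `H(-n-t) = (-1)^{n-1} H(t)` for every integer `t`. -/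
theorem birkhoff_ehrhart_symmetry (n : ℕ) (hn : 1 ≤ n) (H : Polynomial ℚ)
    (hH : ∀ t : ℕ, 0 < t →
      H.eval (t : ℚ) = Nat.card {M : Matrix (Fin n) (Fin n) ℕ //
        (∀ i, ∑ j, M i j = t) ∧ (∀ j, ∑ i, M i j = t)}) :
    ∀ t : ℤ, H.eval ((-(n : ℤ) - t : ℤ) : ℚ) = (-1) ^ (n - 1) * H.eval (t : ℚ) := by
  intro t
  obtain ⟨m, rfl⟩ := Nat.exists_eq_add_of_le' hn
  obtain ⟨q, hq, hg, hpos⟩ := Matrix.exists_isGeneric (ι := Fin (m + 1))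
  have hrec := Matrix.isReciprocal_pulledSeries hq hg
  rw [Matrix.finrank_supportSpace_of_ne_zero fun i j => (hpos i j).ne'] at hrec
  have hcoeff : ∀ s > 0, PowerSeries.coeff s (Matrix.pulledSeries q) = H.eval (s : ℚ) :=
    fun s hs => by
      rw [Matrix.pulledSeries, PowerSeries.coeff_mk, Matrix.ncard_pulledMatrices_of_pos hpos,
        hH s hs]
  have hcoeff' : ∀ s > m + 1, PowerSeries.coeff s (Matrix.pulledSeries (-q)) =
      (H.comp (Polynomial.X - Polynomial.C ((m + 1 : ℕ) : ℚ))).eval (s : ℚ) := fun s hs => by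
    obtain ⟨u, rfl⟩ := Nat.exists_eq_add_of_lt hs
    have h := Matrix.ncard_pulledMatrices_neg_of_pos hpos (u + 1)
    rw [Fintype.card_fin, show u + 1 + (m + 1) = m + 1 + u + 1 by ring] at h
    have h' := hcoeff (u + 1) u.succ_pos
    rw [Matrix.pulledSeries, PowerSeries.coeff_mk] at h' ⊢
    rw [h, h', Polynomial.eval_comp]
    congr 1
    simp
    ring
  have key := hrec.eval_eq (fun s hs => hcoeff s (by omega)) hcoeff' (-(t : ℚ))
  have hsign : (-1 : ℚ) ^ (m * m) = (-1) ^ m := by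
    rcases m.even_or_odd with h | h
    · rw [h.neg_one_pow, (h.mul_right m).neg_one_pow]
    · rw [h.neg_one_pow, (h.mul h).neg_one_pow]
  rw [neg_neg, hsign, Polynomial.eval_comp] at key
  rw [Nat.add_sub_cancel, ← key]
  congr 1
  simp
  ring
end

section
/- The number of 4×4 semi-magic squares with line sum t equals (11/11340)t^9 + (11/630)t^8 + (19/135)t^7 + (2/3)t^6 + (1109/540)t^5 + (43/10)t^4 + (35117/5670)t^3 + (379/63)t^2 + (65/18)t + 1. -/
open Finset

/-- The sum of `f` over the depths `min a (N - 1 - a)` of the points `a` of `{0, …, N - 1}`. -/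
def depthSum (N : ℕ) (f : ℕ → ℚ) : ℚ := ∑ a ∈ range N, f (min a (N - 1 - a))

lemma depthSum_add_two (N : ℕ) (f : ℕ → ℚ) :
    depthSum (N + 2) f = 2 * f 0 + depthSum N (fun x => f (x + 1)) := by
  unfold depthSum
  rw [sum_range_succ, sum_range_succ', add_assoc, add_comm]
  congr 1
  · simp; ring
  · refine sum_congr rfl fun a ha => ?_
    rw [mem_range] at ha
    congr 1
    omega

lemma depthSum_add (N : ℕ) (f g : ℕ → ℚ) :
    depthSum N (fun x => f x + g x) = depthSum N f + depthSum N g := sum_add_distrib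

lemma depthSum_const (N : ℕ) (c : ℚ) : depthSum N (fun _ => c) = N * c := by
  simp [depthSum]

lemma depthSum_const_mul (N : ℕ) (c : ℚ) (f : ℕ → ℚ) :
    depthSum N (fun x => c * f x) = c * depthSum N f := (mul_sum _ _ _).symm

lemma depthSum_mul_const (N : ℕ) (c : ℚ) (f : ℕ → ℚ) :
    depthSum N (fun x => f x * c) = depthSum N f * c := (sum_mul _ _ _).symm

lemma depthSum_comm (N : ℕ) (f : ℕ → ℕ → ℚ) :
    depthSum N (fun x => depthSum N fun y => f x y) =
      depthSum N (fun y => depthSum N fun x => f x y) := sum_comm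

/-- The minimum of two natural numbers, as a rational number. -/
def minQ (x y : ℕ) : ℚ := ((min x y : ℕ) : ℚ)

lemma minQ_comm (x y : ℕ) : minQ x y = minQ y x := by rw [minQ, min_comm, minQ]

lemma minQ_zero_left (x : ℕ) : minQ 0 x = 0 := by simp [minQ]

lemma minQ_zero_right (x : ℕ) : minQ x 0 = 0 := by simp [minQ]

lemma minQ_succ (x y : ℕ) : minQ (x + 1) (y + 1) = 1 + minQ x y := by
  simp only [minQ, Nat.add_min_add_right]
  push_cast
  ring

/-- Fourfold iterated depth sum. -/
def depthSum₄ (N : ℕ) (f : ℕ → ℕ → ℕ → ℕ → ℚ) : ℚ :=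
  depthSum N fun x => depthSum N fun y => depthSum N fun z => depthSum N fun w => f x y z w

lemma depthSum₄_add (N : ℕ) (f g : ℕ → ℕ → ℕ → ℕ → ℚ) :
    depthSum₄ N (fun x y z w => f x y z w + g x y z w) = depthSum₄ N f + depthSum₄ N g := by
  simp only [depthSum₄, depthSum_add]

lemma depthSum₄_const_mul (N : ℕ) (c : ℚ) (f : ℕ → ℕ → ℕ → ℕ → ℚ) :
    depthSum₄ N (fun x y z w => c * f x y z w) = c * depthSum₄ N f := by
  simp only [depthSum₄, depthSum_const_mul]

lemma depthSum₄_const (N : ℕ) (c : ℚ) : depthSum₄ N (fun _ _ _ _ => c) = N ^ 4 * c := by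
  simp only [depthSum₄, depthSum_const]
  ring

lemma depthSum₄_rotate (N : ℕ) (f : ℕ → ℕ → ℕ → ℕ → ℚ) :
    depthSum₄ N (fun x y z w => f y z w x) = depthSum₄ N f := by
  simp only [depthSum₄]
  rw [depthSum_comm]
  congr 1; funext x
  rw [depthSum_comm]
  congr 1; funext y
  rw [depthSum_comm]

/-- The sum of `minQ` over the paths with one edge. -/
def pathSum₁ (N : ℕ) : ℚ := depthSum N fun x => depthSum N fun y => minQ x y

/-- The sum of products of `minQ` over the paths with two edges. -/
def pathSum₂ (N : ℕ) : ℚ :=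
  depthSum N fun x => depthSum N fun y => depthSum N fun z => minQ x y * minQ y z

/-- The sum of products of `minQ` over the paths with three edges. -/
def pathSum₃ (N : ℕ) : ℚ := depthSum₄ N fun x y z w => minQ x y * minQ y z * minQ z w

/-- The sum of products of `minQ` over the cycles with four edges. -/
def cycleSum₄ (N : ℕ) : ℚ :=
  depthSum₄ N fun x y z w => minQ x y * minQ y z * minQ z w * minQ w x

lemma depthSum₄_edge (N : ℕ) :
    depthSum₄ N (fun x y _ _ => minQ x y) = N ^ 2 * pathSum₁ N ∧
    depthSum₄ N (fun _ y z _ => minQ y z) = N ^ 2 * pathSum₁ N ∧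
    depthSum₄ N (fun _ _ z w => minQ z w) = N ^ 2 * pathSum₁ N ∧
    depthSum₄ N (fun x _ _ w => minQ w x) = N ^ 2 * pathSum₁ N := by
  have h : depthSum₄ N (fun x y _ _ => minQ x y) = N ^ 2 * pathSum₁ N := by
    simp only [depthSum₄, depthSum_const, depthSum_const_mul, pathSum₁]
    ring
  have h₁ := depthSum₄_rotate N (fun x y _ _ => minQ x y)
  have h₂ := depthSum₄_rotate N (fun _ y z _ => minQ y z)
  have h₃ := depthSum₄_rotate N (fun _ _ z w => minQ z w)
  exact ⟨h, h₁.trans h, h₂.trans (h₁.trans h), h₃.trans (h₂.trans (h₁.trans h))⟩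

lemma depthSum₄_two_edges (N : ℕ) :
    depthSum₄ N (fun x y z _ => minQ x y * minQ y z) = N * pathSum₂ N ∧
    depthSum₄ N (fun _ y z w => minQ y z * minQ z w) = N * pathSum₂ N ∧
    depthSum₄ N (fun x _ z w => minQ z w * minQ w x) = N * pathSum₂ N ∧
    depthSum₄ N (fun x y _ w => minQ w x * minQ x y) = N * pathSum₂ N := by
  have h : depthSum₄ N (fun x y z _ => minQ x y * minQ y z) = N * pathSum₂ N := by
    simp only [depthSum₄, depthSum_const, depthSum_const_mul, pathSum₂]
  have h₁ := depthSum₄_rotate N (fun x y z _ => minQ x y * minQ y z)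
  have h₂ := depthSum₄_rotate N (fun _ y z w => minQ y z * minQ z w)
  have h₃ := depthSum₄_rotate N (fun x _ z w => minQ z w * minQ w x)
  exact ⟨h, h₁.trans h, h₂.trans (h₁.trans h), h₃.trans (h₂.trans (h₁.trans h))⟩

lemma depthSum₄_opposite_edges (N : ℕ) :
    depthSum₄ N (fun x y z w => minQ x y * minQ z w) = pathSum₁ N ^ 2 ∧
    depthSum₄ N (fun x y z w => minQ y z * minQ w x) = pathSum₁ N ^ 2 := by
  have h : depthSum₄ N (fun x y z w => minQ x y * minQ z w) = pathSum₁ N ^ 2 := by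
    simp only [depthSum₄, depthSum_const_mul, depthSum_mul_const, pathSum₁, sq]
  exact ⟨h, (depthSum₄_rotate N (fun x y z w => minQ x y * minQ z w)).trans h⟩

lemma depthSum₄_three_edges (N : ℕ) :
    depthSum₄ N (fun x y z w => minQ x y * minQ y z * minQ z w) = pathSum₃ N ∧
    depthSum₄ N (fun x y z w => minQ y z * minQ z w * minQ w x) = pathSum₃ N ∧
    depthSum₄ N (fun x y z w => minQ z w * minQ w x * minQ x y) = pathSum₃ N ∧
    depthSum₄ N (fun x y z w => minQ w x * minQ x y * minQ y z) = pathSum₃ N := by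
  have h : depthSum₄ N (fun x y z w => minQ x y * minQ y z * minQ z w) = pathSum₃ N := rfl
  have h₁ := depthSum₄_rotate N (fun x y z w => minQ x y * minQ y z * minQ z w)
  have h₂ := depthSum₄_rotate N (fun x y z w => minQ y z * minQ z w * minQ w x)
  have h₃ := depthSum₄_rotate N (fun x y z w => minQ z w * minQ w x * minQ x y)
  exact ⟨h, h₁.trans h, h₂.trans (h₁.trans h), h₃.trans (h₂.trans (h₁.trans h))⟩

lemma depthSum₄_cycle (N : ℕ) (p q : ℚ) :
    depthSum₄ N (fun x y z w =>
      (p + minQ x y) * (q + minQ y z) * (p + minQ z w) * (q + minQ w x)) =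
    p ^ 2 * q ^ 2 * N ^ 4 + 2 * p * q * (p + q) * N ^ 2 * pathSum₁ N
      + (p ^ 2 + q ^ 2) * pathSum₁ N ^ 2 + 4 * p * q * N * pathSum₂ N
      + 2 * (p + q) * pathSum₃ N + cycleSum₄ N := by
  obtain ⟨a₁, a₂, a₃, a₄⟩ := depthSum₄_edge N
  obtain ⟨b₁, b₂, b₃, b₄⟩ := depthSum₄_two_edges N
  obtain ⟨c₁, c₂⟩ := depthSum₄_opposite_edges N
  obtain ⟨d₁, d₂, d₃, d₄⟩ := depthSum₄_three_edges N
  have key : (fun x y z w =>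
      (p + minQ x y) * (q + minQ y z) * (p + minQ z w) * (q + minQ w x)) =
      fun x y z w => p ^ 2 * q ^ 2
        + (p * q ^ 2) * minQ x y + (p ^ 2 * q) * minQ y z
        + (p * q ^ 2) * minQ z w + (p ^ 2 * q) * minQ w x
        + (p * q) * (minQ x y * minQ y z) + (p * q) * (minQ y z * minQ z w)
        + (p * q) * (minQ z w * minQ w x) + (p * q) * (minQ w x * minQ x y)
        + q ^ 2 * (minQ x y * minQ z w) + p ^ 2 * (minQ y z * minQ w x)
        + q * (minQ x y * minQ y z * minQ z w) + p * (minQ y z * minQ z w * minQ w x)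
        + q * (minQ z w * minQ w x * minQ x y) + p * (minQ w x * minQ x y * minQ y z)
        + minQ x y * minQ y z * minQ z w * minQ w x := by
    funext x y z w
    ring
  rw [key]
  simp only [depthSum₄_add, depthSum₄_const_mul, depthSum₄_const,
    a₁, a₂, a₃, a₄, b₁, b₂, b₃, b₄, c₁, c₂, d₁, d₂, d₃, d₄]
  rw [← cycleSum₄]
  ring

lemma pathSum₁_add_two (N : ℕ) : pathSum₁ (N + 2) = N ^ 2 + pathSum₁ N := by
  simp only [pathSum₁, depthSum_add_two, minQ_zero_left, minQ_zero_right, minQ_succ,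
    depthSum_add, depthSum_const]
  ring

lemma pathSum₂_add_two (N : ℕ) :
    pathSum₂ (N + 2) = N ^ 3 + 2 * N * pathSum₁ N + pathSum₂ N := by
  simp only [pathSum₂, pathSum₁, depthSum_add_two, minQ_zero_left, minQ_zero_right, minQ_succ,
    add_mul, mul_add, zero_mul, mul_zero, one_mul, mul_one, depthSum_add, depthSum_const,
    depthSum_const_mul, depthSum_mul_const]
  ring

lemma pathSum₃_add_two (N : ℕ) :
    pathSum₃ (N + 2) = N ^ 4 + 3 * N ^ 2 * pathSum₁ N + pathSum₁ N ^ 2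
      + 2 * N * pathSum₂ N + pathSum₃ N := by
  obtain ⟨a₁, a₂, a₃, -⟩ := depthSum₄_edge N
  obtain ⟨b₁, b₂, -, -⟩ := depthSum₄_two_edges N
  obtain ⟨c₁, -⟩ := depthSum₄_opposite_edges N
  have step : pathSum₃ (N + 2) =
      depthSum₄ N fun x y z w => (1 + minQ x y) * (1 + minQ y z) * (1 + minQ z w) := by
    simp only [pathSum₃, depthSum₄, depthSum_add_two, minQ_zero_left, minQ_zero_right, minQ_succ,
      zero_mul, mul_zero, depthSum_const, zero_add]
  have key : (fun x y z w => (1 + minQ x y) * (1 + minQ y z) * (1 + minQ z w)) =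
      fun x y z w => 1 + minQ x y + minQ y z + minQ z w + minQ x y * minQ y z
        + minQ y z * minQ z w + minQ x y * minQ z w + minQ x y * minQ y z * minQ z w := by
    funext x y z w
    ring
  rw [step, key]
  simp only [depthSum₄_add, depthSum₄_const, a₁, a₂, a₃, b₁, b₂, c₁]
  rw [← pathSum₃]
  ring

lemma cycleSum₄_add_two (N : ℕ) :
    cycleSum₄ (N + 2) = N ^ 4 + 4 * N ^ 2 * pathSum₁ N + 2 * pathSum₁ N ^ 2
      + 4 * N * pathSum₂ N + 4 * pathSum₃ N + cycleSum₄ N := by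
  have step : cycleSum₄ (N + 2) = depthSum₄ N fun x y z w =>
      (1 + minQ x y) * (1 + minQ y z) * (1 + minQ z w) * (1 + minQ w x) := by
    simp only [cycleSum₄, depthSum₄, depthSum_add_two, minQ_zero_left, minQ_zero_right, minQ_succ,
      zero_mul, mul_zero, depthSum_const, zero_add]
  rw [step, depthSum₄_cycle]
  ring

lemma pathSum₁_eq (N : ℕ) : pathSum₁ N = N / 3 - N ^ 2 / 2 + N ^ 3 / 6 := by
  induction N using Nat.twoStepInduction with
  | zero => simp [pathSum₁, depthSum]
  | one => norm_num [pathSum₁, depthSum, minQ]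
  | more n ih _ => rw [pathSum₁_add_two, ih]; push_cast; ring

lemma pathSum₂_eq (N : ℕ) :
    pathSum₂ N = 2 / 15 * N - N ^ 2 / 3 + N ^ 3 / 3 - N ^ 4 / 6 + N ^ 5 / 30 := by
  induction N using Nat.twoStepInduction with
  | zero => simp [pathSum₂, depthSum]
  | one => norm_num [pathSum₂, depthSum, minQ]
  | more n ih _ => rw [pathSum₂_add_two, pathSum₁_eq, ih]; push_cast; ring

lemma pathSum₃_eq (N : ℕ) :
    pathSum₃ N = 2 / 35 * N - 17 / 90 * N ^ 2 + 13 / 45 * N ^ 3 - 19 / 72 * N ^ 4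
      + 53 / 360 * N ^ 5 - 17 / 360 * N ^ 6 + 17 / 2520 * N ^ 7 := by
  induction N using Nat.twoStepInduction with
  | zero => simp [pathSum₃, depthSum₄, depthSum]
  | one => norm_num [pathSum₃, depthSum₄, depthSum, minQ]
  | more n ih _ => rw [pathSum₃_add_two, pathSum₂_eq, pathSum₁_eq, ih]; push_cast; ring

lemma cycleSum₄_eq (N : ℕ) :
    cycleSum₄ N = (1 - (-1) ^ N) / 64 - 4 / 35 * N + 64 / 315 * N ^ 2 - 11 / 45 * N ^ 3
      + 19 / 90 * N ^ 4 - 23 / 180 * N ^ 5 + 19 / 360 * N ^ 6 - 17 / 1260 * N ^ 7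
      + 17 / 10080 * N ^ 8 := by
  induction N using Nat.twoStepInduction with
  | zero => simp [cycleSum₄, depthSum₄, depthSum]
  | one => norm_num [cycleSum₄, depthSum₄, depthSum, minQ]
  | more n ih _ =>
    rw [cycleSum₄_add_two, pathSum₃_eq, pathSum₂_eq, pathSum₁_eq, ih]; push_cast; ring

lemma finite_blockSquares (t s : ℕ) :
    {M : Matrix (Fin 4) (Fin 4) ℕ | ((∀ i, ∑ j, M i j = t) ∧ (∀ j, ∑ i, M i j = t)) ∧
      M 0 0 + M 0 1 + M 1 0 + M 1 1 = s}.Finite := by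
  refine (Set.finite_Icc (0 : Fin 4 → Fin 4 → ℕ) fun _ _ => t).subset ?_
  rintro M ⟨⟨h, -⟩, -⟩
  exact ⟨fun _ _ => Nat.zero_le _, fun i j =>
    (single_le_sum (f := M i) (fun _ _ => Nat.zero_le _) (mem_univ j)).trans_eq (h i)⟩

/-- The finset of semi-magic squares with line sum `t` whose upper left block has sum `s`. -/
noncomputable def blockSquares (t s : ℕ) : Finset (Matrix (Fin 4) (Fin 4) ℕ) :=
  (finite_blockSquares t s).toFinset

lemma mem_blockSquares {t s : ℕ} {M : Matrix (Fin 4) (Fin 4) ℕ} :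
    M ∈ blockSquares t s ↔
      ((∀ i, ∑ j, M i j = t) ∧ (∀ j, ∑ i, M i j = t)) ∧ M 0 0 + M 0 1 + M 1 0 + M 1 1 = s :=
  Set.Finite.mem_toFinset _

lemma natCard_eq_sum_blockSquares (t : ℕ) :
    Nat.card {M : Matrix (Fin 4) (Fin 4) ℕ //
      (∀ i, ∑ j, M i j = t) ∧ (∀ j, ∑ i, M i j = t)} =
      ∑ s ∈ range (2 * t + 1), #(blockSquares t s) := by
  classical
  have hdisj : (range (2 * t + 1) : Set ℕ).PairwiseDisjoint (blockSquares t) := by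
    intro a _ b _ hab
    refine disjoint_left.2 fun M ha hb => hab ?_
    rw [mem_blockSquares] at ha hb
    exact ha.2.symm.trans hb.2
  rw [← card_biUnion hdisj]
  refine Nat.subtype_card _ fun M => ?_
  simp only [mem_biUnion, mem_range, mem_blockSquares]
  refine ⟨fun ⟨_, _, h, _⟩ => h, fun h => ⟨_, ?_, h, rfl⟩⟩
  have h₀ := h.1 0
  have h₁ := h.1 1
  simp only [Fin.sum_univ_four] at h₀ h₁
  omega

lemma card_blockSquares_reflect {t s : ℕ} (hs : s ≤ 2 * t) :
    #(blockSquares t (2 * t - s)) = #(blockSquares t s) := by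
  let f : Matrix (Fin 4) (Fin 4) ℕ → Matrix (Fin 4) (Fin 4) ℕ := fun M i j => M i (j + 2)
  have hf : ∀ M, f (f M) = M := by
    intro M
    funext i j
    simp only [f, add_assoc]
    congr 1
    fin_cases j <;> rfl
  have hmem : ∀ s ≤ 2 * t, ∀ M ∈ blockSquares t s, f M ∈ blockSquares t (2 * t - s) := by
    intro s hs M hM
    rw [mem_blockSquares] at hM ⊢
    obtain ⟨⟨hr, hc⟩, h⟩ := hM
    refine ⟨⟨fun i => ?_, fun j => hc (j + 2)⟩, ?_⟩
    · rw [← hr i]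
      exact Equiv.sum_comp (Equiv.addRight (2 : Fin 4)) (M i)
    · have h₀ := hr 0
      have h₁ := hr 1
      simp only [Fin.sum_univ_four] at h₀ h₁
      change M 0 2 + M 0 3 + M 1 2 + M 1 3 = _
      omega
  refine card_nbij' f f (fun M hM => ?_) (hmem s hs) (fun M _ => hf M) (fun M _ => hf M)
  have := hmem _ (Nat.sub_le _ s) M hM
  rwa [Nat.sub_sub_self hs] at this

lemma natCard_eq_two_mul_sum (t : ℕ) :
    Nat.card {M : Matrix (Fin 4) (Fin 4) ℕ //
      (∀ i, ∑ j, M i j = t) ∧ (∀ j, ∑ i, M i j = t)} =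
      2 * ∑ s ∈ range t, #(blockSquares t s) + #(blockSquares t t) := by
  have hsplit : ∑ s ∈ range (2 * t + 1), #(blockSquares t s) =
      ∑ s ∈ range (t + 1), #(blockSquares t s) +
        ∑ s ∈ range t, #(blockSquares t (t + 1 + s)) := by
    rw [← sum_range_add, show t + 1 + t = 2 * t + 1 by ring]
  have hreflect : ∑ s ∈ range t, #(blockSquares t (t + 1 + s)) =
      ∑ s ∈ range t, #(blockSquares t s) := by
    rw [← sum_range_reflect]
    refine sum_congr rfl fun s hs => ?_
    rw [mem_range] at hs
    rw [← card_blockSquares_reflect (show s ≤ 2 * t by omega)]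
    congr 2
    omega
  rw [natCard_eq_sum_blockSquares, hsplit, hreflect, sum_range_succ]
  ring

/-- The square with upper left block sum `s` determined by the first row sum `r` and the first
column sum `c` of the upper left block, those (`e` and `d`) of the lower right block, and the
upper left entries `x`, `y`, `z`, `w` of the four blocks. -/
def squareOf (t s : ℕ) (k : Σ _ : ℕ × ℕ × ℕ × ℕ, ℕ × ℕ × ℕ × ℕ) : Matrix (Fin 4) (Fin 4) ℕ :=
  let ⟨(r, c, e, d), (x, y, z, w)⟩ := k
  !![x, r - x, w, t - r - w;
     c - x, s + x - r - c, t - d - w, d + r + w - s;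
     y, t - e - y, z, e - z;
     t - c - y, c + e + y - s, d - z, s + z - d - e]

/-- The parameters of a square that `squareOf` takes. -/
def paramsOf (M : Matrix (Fin 4) (Fin 4) ℕ) : Σ _ : ℕ × ℕ × ℕ × ℕ, ℕ × ℕ × ℕ × ℕ :=
  ⟨(M 0 0 + M 0 1, M 0 0 + M 1 0, M 2 2 + M 2 3, M 2 2 + M 3 2), (M 0 0, M 2 0, M 2 2, M 0 2)⟩

/-- The parameters of the squares with line sum `t` and upper left block sum `s`. -/
def squareParams (t s : ℕ) : Finset (Σ _ : ℕ × ℕ × ℕ × ℕ, ℕ × ℕ × ℕ × ℕ) :=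
  (range (s + 1) ×ˢ range (s + 1) ×ˢ range (s + 1) ×ˢ range (s + 1)).sigma fun k =>
    let (r, c, e, d) := k
    Icc (r + c - s) (min r c) ×ˢ Icc (s - c - e) (min (t - c) (t - e)) ×ˢ
      Icc (e + d - s) (min e d) ×ˢ Icc (s - d - r) (min (t - d) (t - r))

lemma sums_of_mem_blockSquares {t s : ℕ} {M : Matrix (Fin 4) (Fin 4) ℕ}
    (hM : M ∈ blockSquares t s) :
    (M 0 0 + M 0 1 + M 0 2 + M 0 3 = t ∧ M 1 0 + M 1 1 + M 1 2 + M 1 3 = t ∧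
      M 2 0 + M 2 1 + M 2 2 + M 2 3 = t ∧ M 3 0 + M 3 1 + M 3 2 + M 3 3 = t) ∧
    (M 0 0 + M 1 0 + M 2 0 + M 3 0 = t ∧ M 0 1 + M 1 1 + M 2 1 + M 3 1 = t ∧
      M 0 2 + M 1 2 + M 2 2 + M 3 2 = t ∧ M 0 3 + M 1 3 + M 2 3 + M 3 3 = t) ∧
    M 0 0 + M 0 1 + M 1 0 + M 1 1 = s := by
  rw [mem_blockSquares] at hM
  obtain ⟨⟨hr, hc⟩, h⟩ := hM
  simp only [Fin.sum_univ_four] at hr hc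
  exact ⟨⟨hr 0, hr 1, hr 2, hr 3⟩, ⟨hc 0, hc 1, hc 2, hc 3⟩, h⟩

lemma squareOf_paramsOf {t s : ℕ} {M : Matrix (Fin 4) (Fin 4) ℕ} (hM : M ∈ blockSquares t s) :
    squareOf t s (paramsOf M) = M := by
  have h := sums_of_mem_blockSquares hM
  conv_rhs => rw [← Matrix.etaExpand_eq M]
  change !![_, _, _, _; _, _, _, _; _, _, _, _; _, _, _, _] =
    !![M 0 0, M 0 1, M 0 2, M 0 3; M 1 0, M 1 1, M 1 2, M 1 3;
      M 2 0, M 2 1, M 2 2, M 2 3; M 3 0, M 3 1, M 3 2, M 3 3]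
  congr 10 <;> omega

lemma squareOf_mem_blockSquares {t s : ℕ} (hs : s ≤ t) {k : Σ _ : ℕ × ℕ × ℕ × ℕ, ℕ × ℕ × ℕ × ℕ}
    (hk : k ∈ squareParams t s) : squareOf t s k ∈ blockSquares t s := by
  obtain ⟨⟨r, c, e, d⟩, ⟨x, y, z, w⟩⟩ := k
  simp only [squareParams, mem_sigma, mem_product, mem_range, mem_Icc, le_min_iff] at hk
  rw [mem_blockSquares]
  simp only [squareOf, Fin.sum_univ_four]
  refine ⟨⟨fun i => ?_, fun j => ?_⟩, ?_⟩
  · fin_cases i <;> simp <;> omega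
  · fin_cases j <;> simp <;> omega
  · simp
    omega

lemma card_blockSquares_eq_card_squareParams {t s : ℕ} (hs : s ≤ t) :
    #(blockSquares t s) = #(squareParams t s) := by
  refine card_nbij' paramsOf (squareOf t s) (fun M hM => ?_)
    (fun k hk => squareOf_mem_blockSquares hs hk) (fun M hM => squareOf_paramsOf hM) ?_
  · have h := sums_of_mem_blockSquares hM
    simp only [mem_coe, squareParams, paramsOf, mem_sigma, mem_product, mem_range, mem_Icc,
      le_min_iff]
    omega
  · rintro ⟨⟨r, c, e, d⟩, ⟨x, y, z, w⟩⟩ hk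
    simp only [mem_coe, squareParams, mem_sigma, mem_product, mem_range, mem_Icc,
      le_min_iff] at hk
    simp [squareOf, paramsOf]
    omega

lemma card_blockSquares {t s : ℕ} (hs : s ≤ t) :
    (#(blockSquares t s) : ℚ) = depthSum₄ (s + 1) fun x y z w =>
      (1 + minQ x y) * ((1 + t - s) + minQ y z) * (1 + minQ z w) * ((1 + t - s) + minQ w x) := by
  have hA : ∀ a ∈ range (s + 1), ∀ b ∈ range (s + 1),
      ((#(Icc (a + b - s) (min a b)) : ℕ) : ℚ) = 1 + minQ (min a (s - a)) (min b (s - b)) := by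
    intro a ha b hb
    rw [mem_range] at ha hb
    rw [minQ, Nat.card_Icc]
    norm_cast
    omega
  have hB : ∀ a ∈ range (s + 1), ∀ b ∈ range (s + 1),
      ((#(Icc (s - a - b) (min (t - a) (t - b))) : ℕ) : ℚ) =
        (1 + t - s) + minQ (min a (s - a)) (min b (s - b)) := by
    intro a ha b hb
    rw [mem_range] at ha hb
    rw [minQ, Nat.card_Icc, ← Nat.cast_one (R := ℚ), ← Nat.cast_add, ← Nat.cast_sub (by omega)]
    norm_cast
    omega
  rw [card_blockSquares_eq_card_squareParams hs, squareParams, card_sigma]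
  simp only [sum_product, card_product, depthSum₄, depthSum, Nat.add_sub_cancel]
  push_cast
  refine sum_congr rfl fun r hr => sum_congr rfl fun c hc => sum_congr rfl fun e he =>
    sum_congr rfl fun d hd => ?_
  rw [hA r hr c hc, hB c hc e he, hA e he d hd, hB d hd r hr]
  ring

lemma sum_card_blockSquares {t n : ℕ} (hn : n ≤ t) :
    (∑ s ∈ range n, (#(blockSquares t s) : ℚ)) =
      (n / 64 + (1 - (-1) ^ n) / 128)
      + (4213 / 20160 * n + 361 / 630 * n ^ 2 + 1549 / 3240 * n ^ 3 - 13 / 480 * n ^ 4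
        - 967 / 4320 * n ^ 5 - 3 / 40 * n ^ 6 + 293 / 15120 * n ^ 7 + 271 / 20160 * n ^ 8
        + 23 / 12960 * n ^ 9)
      + t * (2 / 15 * n + 311 / 504 * n ^ 2 + 337 / 360 * n ^ 3 + 749 / 1440 * n ^ 4
        - 1 / 45 * n ^ 5 - 19 / 144 * n ^ 6 - 17 / 360 * n ^ 7 - 53 / 10080 * n ^ 8)
      + t ^ 2 * (1 / 140 * n + 1 / 8 * n ^ 2 + 23 / 72 * n ^ 3 + 1 / 3 * n ^ 4
        + 61 / 360 * n ^ 5 + 1 / 24 * n ^ 6 + 1 / 252 * n ^ 7) := by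
  induction n with
  | zero => simp
  | succ n ih =>
    rw [sum_range_succ, ih (by omega), card_blockSquares (by omega), depthSum₄_cycle,
      cycleSum₄_eq, pathSum₃_eq, pathSum₂_eq, pathSum₁_eq]
    push_cast
    ring


/-- The number of 4×4 semi-magic squares with line sum `t` equals
`(11/11340)t⁹ + (11/630)t⁸ + (19/135)t⁷ + (2/3)t⁶ + (1109/540)t⁵ + (43/10)t⁴
 + (35117/5670)t³ + (379/63)t² + (65/18)t + 1`. -/
theorem birkhoff_H4_poly (t : ℕ) :
    (Nat.card {M : Matrix (Fin 4) (Fin 4) ℕ //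
      (∀ i, ∑ j, M i j = t) ∧ (∀ j, ∑ i, M i j = t)} : ℚ) =
      (11 / 11340) * (t : ℚ) ^ 9 + (11 / 630) * (t : ℚ) ^ 8
        + (19 / 135) * (t : ℚ) ^ 7 + (2 / 3) * (t : ℚ) ^ 6
        + (1109 / 540) * (t : ℚ) ^ 5 + (43 / 10) * (t : ℚ) ^ 4
        + (35117 / 5670) * (t : ℚ) ^ 3 + (379 / 63) * (t : ℚ) ^ 2
        + (65 / 18) * (t : ℚ) + 1 := by
  rw [natCard_eq_two_mul_sum]
  push_cast
  rw [sum_card_blockSquares le_rfl, card_blockSquares le_rfl, depthSum₄_cycle, cycleSum₄_eq,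
    pathSum₃_eq, pathSum₂_eq, pathSum₁_eq]
  push_cast
  ring
end

section
/- Let f(z_1,...,z_n) = (∏_j z_j^{p_j}) / (∏_{1≤j<k≤n} (z_j − z_k)^{q_{jk}}), where the p_j are integers and the q_{jk} are nonnegative integers, and let 1 > ε_1 > ... > ε_n > 0. If for some r with 1 ≤ r ≤ n the total degree of f in the variables z_1,...,z_r is less than −r, then the iterated contour integral of f over the circles |z_j| = ε_j (j = 1,...,n) vanishes. -/
open scoped BigOperators

/-- The iterated contour integral of a function of `k` complex variables over
the circles `|z_j| = ε_j`, integrating the innermost variable first. -/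
noncomputable def iteratedCircleIntegral :
    (k : ℕ) → ((Fin k → ℂ) → ℂ) → (Fin k → ℝ) → ℂ
  | 0, f, _ => f Fin.elim0
  | k + 1, f, ε =>
      circleIntegral
        (fun z => iteratedCircleIntegral k (fun w => f (Fin.cons z w))
          (fun i => ε i.succ)) 0 (ε 0)

/-- The torus of polyradius `ε` centred at the origin. -/
def originTorus {k : ℕ} (ε : Fin k → ℝ) : Set (Fin k → ℂ) := {z | ∀ i, ‖z i‖ = ε i}

lemma cons_mem_originTorus {k : ℕ} {ε : Fin (k + 1) → ℝ} {z : ℂ} {w : Fin k → ℂ}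
    (hz : ‖z‖ = ε 0) (hw : w ∈ originTorus fun i => ε i.succ) :
    (Fin.cons z w : Fin (k + 1) → ℂ) ∈ originTorus ε := by
  intro i
  refine Fin.cases ?_ (fun i => ?_) i
  · simpa using hz
  · simpa using hw i

lemma iteratedCircleIntegral_congr {k : ℕ} {ε : Fin k → ℝ} (hε : ∀ i, 0 ≤ ε i)
    {f g : (Fin k → ℂ) → ℂ} (h : Set.EqOn f g (originTorus ε)) :
    iteratedCircleIntegral k f ε = iteratedCircleIntegral k g ε := by
  induction k with
  | zero => exact h fun i => i.elim0
  | succ k ih =>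
    refine circleIntegral.integral_congr (hε 0) fun z hz => ?_
    refine ih (fun i => hε i.succ) fun w hw => h (cons_mem_originTorus ?_ hw)
    simpa using hz

lemma iteratedCircleIntegral_zero (k : ℕ) (ε : Fin k → ℝ) :
    iteratedCircleIntegral k (fun _ => 0) ε = 0 := by
  induction k with
  | zero => rfl
  | succ k ih => simp [iteratedCircleIntegral, ih, circleIntegral]

lemma iteratedCircleIntegral_mul_const (k : ℕ) (ε : Fin k → ℝ) (f : (Fin k → ℂ) → ℂ) (c : ℂ) :
    iteratedCircleIntegral k (fun z => f z * c) ε = iteratedCircleIntegral k f ε * c := by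
  induction k with
  | zero => rfl
  | succ k ih =>
    simp only [iteratedCircleIntegral, ih, circleIntegral, smul_eq_mul, ← mul_assoc,
      intervalIntegral.integral_mul_const]

lemma circleIntegral_comp_mul_left (f : ℂ → ℂ) (R : ℝ) {u : ℂ} (hu : ‖u‖ = 1) :
    circleIntegral (fun z => f (u * z)) 0 R * u = circleIntegral f 0 R := by
  obtain ⟨a, rfl⟩ : ∃ a : ℝ, Complex.exp (a * Complex.I) = u := (Complex.norm_eq_one_iff u).1 hu
  have hmap (θ : ℝ) : Complex.exp (a * Complex.I) * circleMap 0 R θ = circleMap 0 R (θ + a) := by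
    simp only [circleMap_zero, Complex.ofReal_add, add_mul, Complex.exp_add]
    ring
  have hper : Function.Periodic (fun θ => deriv (circleMap 0 R) θ • f (circleMap 0 R θ))
      (2 * Real.pi) := fun θ => by
    simp only [deriv_circleMap, periodic_circleMap 0 R θ]
  calc
    _ = ∫ θ in (0 : ℝ)..2 * Real.pi,
        deriv (circleMap 0 R) (θ + a) • f (circleMap 0 R (θ + a)) := by
      rw [circleIntegral, ← intervalIntegral.integral_mul_const]
      refine intervalIntegral.integral_congr fun θ _ => ?_
      simp only [deriv_circleMap, smul_eq_mul, ← hmap]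
      ring
    _ = _ := by
      rw [intervalIntegral.integral_comp_add_right
        (fun θ => deriv (circleMap 0 R) θ • f (circleMap 0 R θ)), zero_add, add_comm (2 * Real.pi),
        hper.intervalIntegral_add_eq a 0, zero_add, circleIntegral]

lemma iteratedCircleIntegral_comp_mul_left {k : ℕ} (ε : Fin k → ℝ) (f : (Fin k → ℂ) → ℂ)
    {u : Fin k → ℂ} (hu : ∀ i, ‖u i‖ = 1) :
    iteratedCircleIntegral k (fun z => f (u * z) * ∏ i, u i) ε =
      iteratedCircleIntegral k f ε := by
  rw [iteratedCircleIntegral_mul_const]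
  induction k with
  | zero =>
    simp only [iteratedCircleIntegral, Finset.univ_eq_empty, Finset.prod_empty, mul_one]
    exact congrArg f (Subsingleton.elim _ _)
  | succ k ih =>
    simp only [iteratedCircleIntegral]
    refine Eq.trans ?_ (circleIntegral_comp_mul_left _ (ε 0) (hu 0))
    rw [Fin.prod_univ_succ, mul_comm (u 0), ← mul_assoc]
    congr 1
    rw [circleIntegral, circleIntegral, ← intervalIntegral.integral_mul_const]
    congr 1
    funext θ
    rw [smul_eq_mul, smul_eq_mul, mul_assoc]
    congr 1
    rw [← ih (fun i => ε i.succ) (fun w => f (Fin.cons (u 0 * circleMap 0 (ε 0) θ) w))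
      (fun i => hu i.succ)]
    congr 2
    funext w
    congr 1
    funext i
    refine Fin.cases ?_ (fun i => ?_) i <;> simp

lemma ContinuousOn.comp_cons_circleMap {X : Type*} [TopologicalSpace X] {k : ℕ}
    {ε : Fin (k + 1) → ℝ} (hε : ∀ i, 0 ≤ ε i) {F : X → (Fin (k + 1) → ℂ) → ℂ}
    (hF : ContinuousOn (Function.uncurry F) (Set.univ ×ˢ originTorus ε)) :
    ContinuousOn (Function.uncurry fun (y : X × ℝ) (w : Fin k → ℂ) =>
      F y.1 (Fin.cons (circleMap 0 (ε 0) y.2) w))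
      (Set.univ ×ˢ originTorus fun i => ε i.succ) := by
  have hc : Continuous fun y : (X × ℝ) × (Fin k → ℂ) =>
      (y.1.1, (Fin.cons (circleMap 0 (ε 0) y.1.2) y.2 : Fin (k + 1) → ℂ)) := by
    refine Continuous.prodMk (by fun_prop) (continuous_pi fun i => ?_)
    refine Fin.cases ?_ (fun i => ?_) i
    · simp only [Fin.cons_zero]
      exact (continuous_circleMap 0 (ε 0)).comp (by fun_prop)
    · simp only [Fin.cons_succ]
      fun_prop
  refine hF.comp hc.continuousOn fun y hy => ⟨trivial, cons_mem_originTorus ?_ hy.2⟩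
  simp [abs_of_nonneg (hε 0)]

lemma continuous_iteratedCircleIntegral {X : Type*} [TopologicalSpace X] {k : ℕ}
    {ε : Fin k → ℝ} (hε : ∀ i, 0 ≤ ε i) {F : X → (Fin k → ℂ) → ℂ}
    (hF : ContinuousOn (Function.uncurry F) (Set.univ ×ˢ originTorus ε)) :
    Continuous fun x => iteratedCircleIntegral k (F x) ε := by
  induction k generalizing X with
  | zero =>
    simp only [iteratedCircleIntegral]
    rw [← continuousOn_univ]
    exact hF.comp (f := fun x => (x, Fin.elim0)) (by fun_prop) fun x _ => ⟨trivial, fun i => i.elim0⟩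
  | succ k ih =>
    simp only [iteratedCircleIntegral, circleIntegral]
    refine intervalIntegral.continuous_parametric_intervalIntegral_of_continuous' ?_ _ _
    simp only [smul_eq_mul]
    refine Continuous.mul ?_ (ih (fun i => hε i.succ) (hF.comp_cons_circleMap hε))
    simp only [deriv_circleMap]
    exact ((continuous_circleMap 0 (ε 0)).comp continuous_snd).mul continuous_const

lemma integral_iteratedCircleIntegral {k : ℕ} {ε : Fin k → ℝ} (hε : ∀ i, 0 ≤ ε i)
    {F : ℝ → (Fin k → ℂ) → ℂ}
    (hF : ContinuousOn (Function.uncurry F) (Set.univ ×ˢ originTorus ε)) (a b : ℝ) :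
    ∫ x in a..b, iteratedCircleIntegral k (F x) ε =
      iteratedCircleIntegral k (fun z => ∫ x in a..b, F x z) ε := by
  induction k with
  | zero => rfl
  | succ k ih =>
    have hF' := hF.comp_cons_circleMap hε
    simp only [iteratedCircleIntegral, circleIntegral]
    rw [MeasureTheory.intervalIntegral_intervalIntegral_swap]
    · refine intervalIntegral.integral_congr fun θ _ => ?_
      simp only [intervalIntegral.integral_smul]
      congr 1
      refine ih (fun i => hε i.succ) ?_
      exact hF'.comp (f := fun y : ℝ × (Fin k → ℂ) => ((y.1, θ), y.2)) (by fun_prop)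
        fun y hy => ⟨trivial, hy.2⟩
    · have hc := continuous_iteratedCircleIntegral (fun i => hε i.succ) hF'
      refine ContinuousOn.integrableOn_compact (isCompact_uIcc.prod isCompact_uIcc) ?_
        |>.mono_set (Set.prod_mono Set.uIoc_subset_uIcc Set.uIoc_subset_uIcc)
      refine Continuous.continuousOn ?_
      simp only [Function.uncurry_def, smul_eq_mul, deriv_circleMap]
      exact (((continuous_circleMap 0 (ε 0)).comp continuous_snd).mul continuous_const).mul hc

lemma integral_pow_mul_comp_circleMap_eq_zero {h : ℂ → ℂ}
    (hh : ContinuousOn h (Metric.closedBall 0 1))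
    (hd : DifferentiableOn ℂ h (Metric.ball 0 1)) (m : ℕ) :
    ∫ θ in (0 : ℝ)..2 * Real.pi, circleMap 0 1 θ ^ (m + 1) * h (circleMap 0 1 θ) = 0 := by
  have key : circleIntegral (fun v => v ^ m * h v) 0 1 = 0 := by
    refine Complex.circleIntegral_eq_zero_of_differentiable_on_off_countable zero_le_one
      Set.countable_empty ((continuousOn_pow m).mul hh) fun z hz => ?_
    exact (differentiableAt_pow m).mul (hd.differentiableAt (Metric.isOpen_ball.mem_nhds hz.1))
  rw [circleIntegral] at key
  have hI : (∫ θ in (0 : ℝ)..2 * Real.pi, circleMap 0 1 θ ^ (m + 1) * h (circleMap 0 1 θ)) *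
      Complex.I = 0 := by
    rw [← intervalIntegral.integral_mul_const]
    refine Eq.trans ?_ key
    refine intervalIntegral.integral_congr fun θ _ => ?_
    simp only [deriv_circleMap, smul_eq_mul]
    ring
  exact (mul_eq_zero.1 hI).resolve_right Complex.I_ne_zero

lemma Finset.prod_zpow_eq_zpow_sum₀ {ι G : Type*} [CommGroupWithZero G] {a : G} (ha : a ≠ 0)
    (s : Finset ι) (f : ι → ℤ) : ∏ i ∈ s, a ^ f i = a ^ ∑ i ∈ s, f i := by
  induction s using Finset.cons_induction with
  | empty => simp
  | cons i s hi ih => rw [Finset.prod_cons, Finset.sum_cons, zpow_add₀ ha, ih]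

/-- Let `f(z) = (∏_j z_j^{p_j}) / (∏_{j<k} (z_j - z_k)^{q_{jk}})` and let
`1 > ε_1 > ⋯ > ε_n > 0`.  If for some `1 ≤ r ≤ n` the degree of `f` in the
variables `z_1, …, z_r` (numerator degree minus denominator degree in those
variables) is less than `-r`, then the iterated contour integral of `f` over
the circles `|z_j| = ε_j` vanishes. -/
theorem iterated_integral_vanishes (n : ℕ) (p : Fin n → ℤ) (q : Fin n → Fin n → ℕ)
    (ε : Fin n → ℝ) (hε0 : ∀ j, 0 < ε j) (hε1 : ∀ j, ε j < 1)
    (hεmono : ∀ j k : Fin n, j < k → ε k < ε j)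
    (r : ℕ) (hr1 : 1 ≤ r) (hrn : r ≤ n)
    (hdeg : (∑ j ∈ Finset.univ.filter (fun j : Fin n => (j : ℕ) < r), p j) -
        (∑ j ∈ Finset.univ.filter (fun j : Fin n => (j : ℕ) < r), ∑ k ∈
          Finset.univ.filter (fun k : Fin n => j < k), (q j k : ℤ)) < -(r : ℤ)) :
    iteratedCircleIntegral n
      (fun z => (∏ j, z j ^ (p j)) /
        ∏ j, ∏ k ∈ Finset.univ.filter (fun k : Fin n => j < k),
          (z j - z k) ^ (q j k)) ε = 0 := by
  set s : Finset (Fin n) := Finset.univ.filter fun j : Fin n => (j : ℕ) < r with hs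
  set f : (Fin n → ℂ) → ℂ := fun z => (∏ j, z j ^ (p j)) /
    ∏ j, ∏ k ∈ Finset.univ.filter (fun k : Fin n => j < k), (z j - z k) ^ (q j k) with hf
  have hε0' : ∀ j, 0 ≤ ε j := fun j => (hε0 j).le
  have hfc : ContinuousOn f (originTorus ε) := by
    refine ContinuousOn.div ?_ (by fun_prop) ?_
    · refine continuousOn_finsetProd _ fun j _ => ?_
      refine ContinuousOn.zpow₀ (by fun_prop) _ fun z hz => Or.inl ?_
      rw [← norm_pos_iff, hz j]
      exact hε0 j
    · intro z hz
      refine Finset.prod_ne_zero_iff.2 fun j _ => Finset.prod_ne_zero_iff.2 fun k hk => ?_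
      refine pow_ne_zero _ (sub_ne_zero.2 fun h => ?_)
      have := hεmono j k (Finset.mem_filter.1 hk).2
      rw [← hz j, ← hz k, h] at this
      exact this.false
  set u : ℝ → Fin n → ℂ := fun φ j => if (j : ℕ) < r then (circleMap 0 1 φ)⁻¹ else 1 with hu
  have hu1 : ∀ φ j, ‖u φ j‖ = 1 := fun φ j => by
    simp only [hu]
    split_ifs <;> simp
  have huc : Continuous u := by
    refine continuous_pi fun j => ?_
    simp only [hu]
    split_ifs
    · exact (continuous_circleMap 0 1).inv₀ fun φ => circleMap_ne_center one_ne_zero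
    · exact continuous_const
  have hFc : ContinuousOn (Function.uncurry fun φ z => f (u φ * z) * ∏ j, u φ j)
      (Set.univ ×ˢ originTorus ε) := by
    refine ContinuousOn.mul (hfc.comp (f := fun y : ℝ × (Fin n → ℂ) => u y.1 * y.2)
      (by fun_prop) fun y hy j => ?_) (by fun_prop)
    simpa [hu1] using hy.2 j
  obtain ⟨m, hm⟩ : ∃ m : ℕ, (m : ℤ) + 1 = (∑ j ∈ s, ∑ k ∈
      Finset.univ.filter (fun k : Fin n => j < k), (q j k : ℤ)) - (∑ j ∈ s, p j) - r :=
    ⟨((∑ j ∈ s, ∑ k ∈ Finset.univ.filter (fun k : Fin n => j < k), (q j k : ℤ)) -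
      (∑ j ∈ s, p j) - r - 1).toNat, by omega⟩
  have hcard : s.card = r := by rw [hs, Fin.card_filter_val_lt, min_eq_right hrn]
  have hzero : ∀ z ∈ originTorus ε,
      ∫ φ in (0 : ℝ)..2 * Real.pi, f (u φ * z) * ∏ j, u φ j = 0 := by
    intro z hz
    set D : Fin n → Fin n → ℂ → ℂ := fun j k v =>
      if (j : ℕ) < r ∧ ¬ (k : ℕ) < r then z j - v * z k else z j - z k with hD
    have hDd : ∀ j k, Differentiable ℂ (D j k) := fun j k => by
      simp only [hD]
      split_ifs <;> fun_prop
    have hD0 : ∀ v ∈ Metric.closedBall (0 : ℂ) 1, ∀ j k, j < k → D j k v ≠ 0 := by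
      intro v hv j k hjk
      have hlt : ‖z k‖ < ‖z j‖ := by rw [hz, hz]; exact hεmono j k hjk
      have hv1 : ‖v‖ ≤ 1 := by simpa using hv
      simp only [hD]
      split_ifs
      · refine sub_ne_zero.2 fun h => ?_
        rw [h, norm_mul] at hlt
        nlinarith [norm_nonneg (z k)]
      · refine sub_ne_zero.2 fun h => ?_
        rw [h] at hlt
        exact hlt.false
    set h : ℂ → ℂ := fun v => (∏ j, z j ^ (p j)) /
      ∏ j, ∏ k ∈ Finset.univ.filter (fun k : Fin n => j < k), D j k v ^ (q j k) with hh
    have hhd : DifferentiableOn ℂ h (Metric.closedBall 0 1) := by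
      refine DifferentiableOn.div (by fun_prop) ?_ ?_
      · refine Differentiable.differentiableOn ?_
        refine Differentiable.fun_finsetProd fun j _ => Differentiable.fun_finsetProd fun k _ => ?_
        exact (hDd j k).pow _
      · exact fun v hv => Finset.prod_ne_zero_iff.2 fun j _ => Finset.prod_ne_zero_iff.2
          fun k hk => pow_ne_zero _ (hD0 v hv j k (Finset.mem_filter.1 hk).2)
    rw [← integral_pow_mul_comp_circleMap_eq_zero hhd.continuousOn
      (hhd.mono Metric.ball_subset_closedBall) m]
    refine intervalIntegral.integral_congr fun φ _ => ?_
    have hv : circleMap 0 1 φ ≠ 0 := circleMap_ne_center one_ne_zero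
    simp only [hf, hh, Pi.mul_apply]
    have hmul : ∀ e : Fin n → ℤ, ∏ j, u φ j ^ e j = (circleMap 0 1 φ)⁻¹ ^ ∑ j ∈ s, e j := by
      intro e
      rw [← Finset.prod_zpow_eq_zpow_sum₀ (inv_ne_zero hv), hs, Finset.prod_filter]
      refine Finset.prod_congr rfl fun j _ => ?_
      simp only [hu]
      split_ifs <;> simp
    have hden : ∀ j, ∏ k ∈ Finset.univ.filter (fun k : Fin n => j < k),
        (u φ j * z j - u φ k * z k) ^ (q j k) =
        u φ j ^ (∑ k ∈ Finset.univ.filter (fun k : Fin n => j < k), (q j k : ℤ)) *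
        ∏ k ∈ Finset.univ.filter (fun k : Fin n => j < k), D j k (circleMap 0 1 φ) ^ (q j k) := by
      intro j
      have huj : u φ j ≠ 0 := norm_pos_iff.1 (by rw [hu1]; exact one_pos)
      rw [← Finset.prod_zpow_eq_zpow_sum₀ huj, ← Finset.prod_mul_distrib]
      refine Finset.prod_congr rfl fun k hk => ?_
      have hjk : (j : ℕ) < k := (Finset.mem_filter.1 hk).2
      rw [zpow_natCast, ← mul_pow]
      congr 1
      simp only [hu, hD]
      by_cases hj : (j : ℕ) < r <;> by_cases hk : (k : ℕ) < r
      · simp [hj, hk]; ring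
      · simp only [hj, hk, if_true, if_false, not_false_eq_true, and_self]
        field_simp
      · omega
      · simp [hj, hk]
    have hone : ∏ j, u φ j = (circleMap 0 1 φ)⁻¹ ^ (r : ℤ) := by
      have := hmul fun _ => 1
      simpa [hcard] using this
    have hexp : (circleMap 0 1 φ) ^ (m + 1) = (circleMap 0 1 φ)⁻¹ ^ (∑ j ∈ s, p j) /
        (circleMap 0 1 φ)⁻¹ ^ (∑ j ∈ s, ∑ k ∈ Finset.univ.filter (fun k : Fin n => j < k),
          (q j k : ℤ)) * (circleMap 0 1 φ)⁻¹ ^ (r : ℤ) := by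
      rw [← zpow_sub₀ (inv_ne_zero hv), ← zpow_add₀ (inv_ne_zero hv), inv_zpow', ← zpow_natCast]
      congr 1
      push_cast
      omega
    simp only [hden, mul_zpow, Finset.prod_mul_distrib, hmul, hone, hexp]
    ring
  have hconst : ∀ φ, iteratedCircleIntegral n (fun z => f (u φ * z) * ∏ j, u φ j) ε =
      iteratedCircleIntegral n f ε := fun φ => iteratedCircleIntegral_comp_mul_left ε f (hu1 φ)
  have hswap := integral_iteratedCircleIntegral hε0' hFc 0 (2 * Real.pi)
  rw [iteratedCircleIntegral_congr hε0' (g := fun _ => 0) hzero,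
    iteratedCircleIntegral_zero] at hswap
  simpa [hconst, Real.pi_ne_zero] using hswap
end

section
/- For every n ≥ 1 and every integer t ≥ n, the number of n×n matrices with positive integer entries and all row and column sums equal to t is equal to (−1)^{(n−1)^2} H_n(−t), where H_n is the Ehrhart polynomial of the Birkhoff polytope B_n. -/
open Polynomial in
theorem exists_polynomial_shifted_sub (q : ℚ[X]) :
    ∃ p : ℚ[X], p.eval 0 = 1 ∧ ∀ x, p.eval (x + 1) - p.eval x = q.eval (x + 1) := by
  have key : ∃ p : ℚ[X], ∀ x, p.eval (x + 1) - p.eval x = q.eval (x + 1) := by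
    induction q using Polynomial.induction_on' with
    | add p q hp hq =>
      obtain ⟨p', hp⟩ := hp
      obtain ⟨q', hq⟩ := hq
      refine ⟨p' + q', fun x => ?_⟩
      simp only [eval_add, ← hp, ← hq]
      ring
    | monomial n a =>
      refine ⟨C (a / (n + 1)) * (Polynomial.bernoulli (n + 1)).comp (X + 1), fun x => ?_⟩
      have h := bernoulli_eval_one_add (n + 1) (x + 1)
      have hn : (n : ℚ) + 1 ≠ 0 := by positivity
      simp only [eval_mul, eval_C, eval_comp, eval_add, eval_X, eval_one, eval_monomial]
      rw [add_comm 1 (x + 1)] at h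
      rw [h]
      push_cast
      field_simp
      ring
  obtain ⟨p, hp⟩ := key
  refine ⟨p + C (1 - p.eval 0), by simp, fun x => ?_⟩
  simp [← hp]

/-- The subspace of functions vanishing at every index in `Z`. -/
def vanishingOn {ι : Type*} (Z : Finset ι) : Submodule ℚ (ι → ℚ) where
  carrier := {x | ∀ i ∈ Z, x i = 0}
  add_mem' hx hy i hi := by simp [hx i hi, hy i hi]
  zero_mem' _ _ := rfl
  smul_mem' c x hx i hi := by simp [hx i hi]

theorem mem_vanishingOn {ι : Type*} {Z : Finset ι} {x : ι → ℚ} :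
    x ∈ vanishingOn Z ↔ ∀ i ∈ Z, x i = 0 := Iff.rfl

theorem vanishingOn_insert {ι : Type*} [DecidableEq ι] (a : ι) (Z : Finset ι) :
    vanishingOn (insert a Z) = vanishingOn Z ⊓ vanishingOn {a} := by
  ext x
  simp [mem_vanishingOn, and_comm]

section EulerCharacteristic

open scoped Classical

variable {ι : Type*}

/-- The Euler characteristic of the relatively open convex set `V ∩ U`. -/
noncomputable def cellSign (V : Submodule ℚ (ι → ℚ)) (U : Set (ι → ℚ)) : ℤ :=
  if ∃ x ∈ V, x ∈ U then (-1) ^ Module.finrank ℚ V else 0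

theorem finrank_inf_vanishingOn_singleton [Fintype ι] {V : Submodule ℚ (ι → ℚ)} {a : ι} {y : ι → ℚ}
    (hy : y ∈ V) (hya : y a ≠ 0) :
    Module.finrank ℚ (V ⊓ vanishingOn {a} : Submodule ℚ (ι → ℚ)) + 1 = Module.finrank ℚ V := by
  let f : V →ₗ[ℚ] ℚ := (LinearMap.proj a).comp V.subtype
  have hf : Function.Surjective f := fun c =>
    ⟨(c / y a) • ⟨y, hy⟩, by simp [f, hya]⟩
  have h := f.finrank_range_add_finrank_ker
  rw [LinearMap.range_eq_top.2 hf, finrank_top, Module.finrank_self] at h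
  have h2 : (V ⊓ vanishingOn {a} : Submodule ℚ (ι → ℚ)) = (LinearMap.ker f).map V.subtype := by
    ext x
    simp [mem_vanishingOn, f, and_comm]
  rw [h2, Submodule.finrank_map_subtype_eq, add_comm, h]

theorem cellSign_split [Fintype ι] (V : Submodule ℚ (ι → ℚ)) {U : Set (ι → ℚ)} (hc : Convex ℚ U)
    (ho : IsOpen U) (a : ι) :
    cellSign (V ⊓ vanishingOn {a}) U + cellSign V (U ∩ {x | 0 < x a}) +
      cellSign V (U ∩ {x | x a < 0}) = cellSign V U := by
  by_cases hV : ∀ y ∈ V, y a = 0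
  · have h1 : V ⊓ vanishingOn {a} = V := by
      refine inf_eq_left.2 fun y hy => ?_
      simpa [mem_vanishingOn] using hV y hy
    have h2 : ¬ ∃ x ∈ V, x ∈ U ∩ {x | 0 < x a} := by
      rintro ⟨x, hx, -, h⟩
      simp [hV x hx] at h
    have h3 : ¬ ∃ x ∈ V, x ∈ U ∩ {x | x a < 0} := by
      rintro ⟨x, hx, -, h⟩
      simp [hV x hx] at h
    rw [h1]
    simp only [cellSign, h2, h3, if_false, add_zero]
  push Not at hV
  obtain ⟨y, hy, hya⟩ := hV
  have hrank := finrank_inf_vanishingOn_singleton hy hya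
  by_cases h0 : ∃ x ∈ V, x ∈ U ∧ x a = 0
  · obtain ⟨x, hx, hxU, hxa⟩ := h0
    have hcont : Continuous fun δ : ℚ => x + δ • y := by fun_prop
    have hev : ∀ᶠ δ in nhds (0 : ℚ), x + δ • y ∈ U :=
      hcont.continuousAt.eventually_mem (by simpa using ho.mem_nhds hxU)
    obtain ⟨ε, hε, h⟩ := Metric.eventually_nhds_iff.1 hev
    obtain ⟨δ, hδ, hδε⟩ : ∃ δ : ℚ, 0 < δ ∧ |(δ : ℝ)| < ε := by
      obtain ⟨q, hq, hq'⟩ := exists_rat_btwn hε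
      exact ⟨q, by exact_mod_cast hq, by rwa [abs_of_pos hq]⟩
    have hp : x + δ • y ∈ U := h (by
      rw [dist_zero_right, ← Rat.norm_cast_real, Real.norm_eq_abs]
      simpa using hδε)
    have hm : x + (-δ) • y ∈ U := h (by
      rw [dist_zero_right, ← Rat.norm_cast_real, Real.norm_eq_abs]
      simpa using hδε)
    have hpV : x + δ • y ∈ V := V.add_mem hx (V.smul_mem _ hy)
    have hmV : x + (-δ) • y ∈ V := V.add_mem hx (V.smul_mem _ hy)
    have e0 : ∃ x ∈ V ⊓ vanishingOn {a}, x ∈ U := ⟨x, ⟨hx, by simpa [mem_vanishingOn]⟩, hxU⟩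
    have e1 : ∃ x ∈ V, x ∈ U := ⟨x, hx, hxU⟩
    have e2 : (∃ x ∈ V, x ∈ U ∩ {x | 0 < x a}) ∧ ∃ x ∈ V, x ∈ U ∩ {x | x a < 0} := by
      rcases lt_or_gt_of_ne hya with hlt | hgt
      · exact ⟨⟨_, hmV, hm, by simp [hxa]; nlinarith⟩, ⟨_, hpV, hp, by simp [hxa]; nlinarith⟩⟩
      · exact ⟨⟨_, hpV, hp, by simp [hxa]; nlinarith⟩, ⟨_, hmV, hm, by simp [hxa]; nlinarith⟩⟩
    simp only [cellSign, if_pos e0, if_pos e1, if_pos e2.1, if_pos e2.2, ← hrank]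
    ring
  · have e0 : ¬ ∃ x ∈ V ⊓ vanishingOn {a}, x ∈ U := by
      rintro ⟨x, ⟨hx, hxa⟩, hxU⟩
      exact h0 ⟨x, hx, hxU, by simpa [mem_vanishingOn] using hxa⟩
    have e2 : ¬ ((∃ x ∈ V, x ∈ U ∩ {x | 0 < x a}) ∧ ∃ x ∈ V, x ∈ U ∩ {x | x a < 0}) := by
      rintro ⟨⟨p, hp, hpU, hpa⟩, m, hm, hmU, hma⟩
      simp only [Set.mem_ofPred_eq] at hpa hma
      have hd : 0 < p a - m a := by linarith
      refine h0 ⟨(-m a / (p a - m a)) • p + (p a / (p a - m a)) • m,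
        V.add_mem (V.smul_mem _ hp) (V.smul_mem _ hm), hc hpU hmU ?_ ?_ ?_, ?_⟩
      · exact div_nonneg (by linarith) hd.le
      · exact div_nonneg hpa.le hd.le
      · field_simp; ring
      · simp; field_simp; ring
    have e1 : (∃ x ∈ V, x ∈ U) ↔
        (∃ x ∈ V, x ∈ U ∩ {x | 0 < x a}) ∨ ∃ x ∈ V, x ∈ U ∩ {x | x a < 0} := by
      constructor
      · rintro ⟨x, hx, hxU⟩
        rcases lt_trichotomy (x a) 0 with h | h | h
        · exact Or.inr ⟨x, hx, hxU, h⟩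
        · exact absurd ⟨x, hx, hxU, h⟩ h0
        · exact Or.inl ⟨x, hx, hxU, h⟩
      · rintro (⟨x, hx, hxU, -⟩ | ⟨x, hx, hxU, -⟩) <;> exact ⟨x, hx, hxU⟩
    simp only [cellSign, if_neg e0, e1]
    by_cases hp : ∃ x ∈ V, x ∈ U ∩ {x | 0 < x a}
    · have hm : ¬ ∃ x ∈ V, x ∈ U ∩ {x | x a < 0} := fun hm => e2 ⟨hp, hm⟩
      simp only [hp, hm, true_or, if_true, if_false, add_zero, zero_add]
    · simp only [hp, false_or, if_false, zero_add]

/-- The Euler characteristic of the cone of points of `V ∩ U` nonnegative on `A`, as the sum over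
its cells, the cell of `Z ⊆ A` consisting of the points whose zero set in `A` is `Z`. -/
noncomputable def coneSign [DecidableEq ι] (V : Submodule ℚ (ι → ℚ)) (A : Finset ι)
    (U : Set (ι → ℚ)) : ℤ :=
  ∑ Z ∈ A.powerset, cellSign (V ⊓ vanishingOn Z) (U ∩ {x | ∀ i ∈ A \ Z, 0 < x i})

theorem isOpen_pos_on (B : Finset ι) : IsOpen {x : ι → ℚ | ∀ i ∈ B, 0 < x i} := by
  have : {x : ι → ℚ | ∀ i ∈ B, 0 < x i} = ⋂ i ∈ B, {x | 0 < x i} := by ext; simp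
  rw [this]
  exact isOpen_biInter_finset fun i _ => isOpen_lt continuous_const (continuous_apply i)

theorem convex_pos_on (B : Finset ι) : Convex ℚ {x : ι → ℚ | ∀ i ∈ B, 0 < x i} := by
  have : {x : ι → ℚ | ∀ i ∈ B, 0 < x i} = ⋂ i ∈ B, {x | 0 < x i} := by ext; simp
  rw [this]
  exact convex_iInter₂ fun i _ => convex_halfSpace_gt (LinearMap.proj i).isLinear 0

theorem coneSign_insert [Fintype ι] [DecidableEq ι] (V : Submodule ℚ (ι → ℚ))
    {A : Finset ι} {a : ι} (ha : a ∉ A)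
    {U : Set (ι → ℚ)} (hc : Convex ℚ U) (ho : IsOpen U) :
    coneSign V (insert a A) U = coneSign V A U - coneSign V A (U ∩ {x | x a < 0}) := by
  rw [coneSign, Finset.sum_powerset_insert ha, coneSign, coneSign, ← Finset.sum_add_distrib,
    ← Finset.sum_sub_distrib]
  refine Finset.sum_congr rfl fun Z hZ => ?_
  have haZ : a ∉ Z := fun h => ha (Finset.mem_powerset.1 hZ h)
  rw [← cellSign_split (V ⊓ vanishingOn Z) (hc.inter (convex_pos_on (A \ Z)))
    (ho.inter (isOpen_pos_on (A \ Z))) a, vanishingOn_insert, Finset.insert_sdiff_of_notMem _ haZ,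
    Finset.insert_sdiff_insert, Finset.sdiff_insert_of_notMem ha, ← inf_assoc]
  have h1 : U ∩ {x : ι → ℚ | ∀ i ∈ insert a (A \ Z), 0 < x i} =
      U ∩ {x | ∀ i ∈ A \ Z, 0 < x i} ∩ {x | 0 < x a} := by
    ext x; simp only [Finset.forall_mem_insert, Set.mem_inter_iff, Set.mem_ofPred_eq]; tauto
  rw [h1, Set.inter_right_comm U {x | x a < 0}]
  ring

theorem coneSign_eq_zero [Fintype ι] [DecidableEq ι] (V : Submodule ℚ (ι → ℚ))
    {A : Finset ι} (hA : A.Nonempty)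
    {U : Set (ι → ℚ)} (hc : Convex ℚ U) (ho : IsOpen U)
    (hw : ∃ w ∈ V, w ∈ U ∧ ∀ i ∈ A, w i < 0) : coneSign V A U = 0 := by
  induction A using Finset.induction_on generalizing U with
  | empty => simp at hA
  | insert a A ha ih =>
    rw [coneSign_insert V ha hc ho]
    obtain ⟨w, hwV, hwU, hwA⟩ := hw
    rw [Finset.forall_mem_insert] at hwA
    rcases A.eq_empty_or_nonempty with rfl | hA'
    · have e1 : ∃ x ∈ V, x ∈ U := ⟨w, hwV, hwU⟩
      have e2 : ∃ x ∈ V, x ∈ U ∧ x a < 0 := ⟨w, hwV, hwU, hwA.1⟩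
      have e3 : vanishingOn (∅ : Finset ι) = ⊤ := by ext; simp [mem_vanishingOn]
      simp [coneSign, cellSign, e1, e2, e3]
    · rw [ih hA' hc ho ⟨w, hwV, hwU, hwA.2⟩, ih (U := U ∩ {x | x a < 0}) hA'
        (hc.inter (convex_halfSpace_lt (LinearMap.proj a).isLinear 0))
        (ho.inter (isOpen_lt (continuous_apply a) continuous_const))
        ⟨w, hwV, ⟨hwU, hwA.1⟩, hwA.2⟩, sub_zero]

/-- `F` is the support of a nonnegative point of `W`. -/
def IsFace (W : Submodule ℚ (ι → ℚ)) (F : Finset ι) : Prop :=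
  ∃ x ∈ W, (∀ i ∈ F, 0 < x i) ∧ ∀ i ∉ F, x i = 0

theorem IsFace.union [DecidableEq ι] {W : Submodule ℚ (ι → ℚ)} {F G : Finset ι} (hF : IsFace W F)
    (hG : IsFace W G) : IsFace W (F ∪ G) := by
  obtain ⟨x, hx, hx1, hx2⟩ := hF
  obtain ⟨y, hy, hy1, hy2⟩ := hG
  have hx0 : ∀ i, 0 ≤ x i := fun i => by
    by_cases h : i ∈ F
    exacts [(hx1 i h).le, (hx2 i h).ge]
  have hy0 : ∀ i, 0 ≤ y i := fun i => by
    by_cases h : i ∈ G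
    exacts [(hy1 i h).le, (hy2 i h).ge]
  refine ⟨x + y, W.add_mem hx hy, fun i hi => ?_, fun i hi => ?_⟩
  · rcases Finset.mem_union.1 hi with h | h
    · exact add_pos_of_pos_of_nonneg (hx1 i h) (hy0 i)
    · exact add_pos_of_nonneg_of_pos (hx0 i) (hy1 i h)
  · rw [Finset.mem_union, not_or] at hi
    simp [hx2 i hi.1, hy2 i hi.2]

theorem isFace_iff_of_subset [DecidableEq ι] {W : Submodule ℚ (ι → ℚ)} {F G : Finset ι}
    (hG : IsFace W G)
    (h : G ⊆ F) :
    IsFace W F ↔ ∃ x ∈ W, (∀ i ∈ F \ G, 0 < x i) ∧ ∀ i ∉ F, x i = 0 := by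
  constructor
  · rintro ⟨x, hx, h1, h2⟩
    exact ⟨x, hx, fun i hi => h1 i (Finset.sdiff_subset hi), h2⟩
  · rintro ⟨x, hx, h1, h2⟩
    obtain ⟨g, hg, hg1, hg2⟩ := hG
    obtain ⟨c, hc⟩ : ∃ c : ℚ, ∀ i ∈ G, 0 < x i + c * g i := by
      have : ∀ i ∈ G, ∀ᶠ c : ℚ in Filter.atTop, 0 < x i + c * g i := fun i hi =>
        (Filter.tendsto_atTop_add_const_left _ _
          (Filter.tendsto_id.atTop_mul_const (hg1 i hi))).eventually_gt_atTop 0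
      exact ((Filter.eventually_all_finset G).2 this).exists
    refine ⟨x + c • g, W.add_mem hx (W.smul_mem c hg), fun i hi => ?_, fun i hi => ?_⟩
    · by_cases hiG : i ∈ G
      · simpa using hc i hiG
      · simpa [hg2 i hiG] using h1 i (Finset.mem_sdiff.2 ⟨hi, hiG⟩)
    · simp [h2 i hi, hg2 i (fun h' => hi (h h'))]

/-- Euler's relation for an interval in the face lattice of the cone of nonnegative points
of `W`. -/
theorem sum_faces_neg_one_pow [Fintype ι] [DecidableEq ι] (W : Submodule ℚ (ι → ℚ))
    {G E : Finset ι} (hG : IsFace W G)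
    (hE : IsFace W E) (hGE : G ⊂ E) :
    ∑ F ∈ (Finset.Icc G E).filter (IsFace W),
      (-1 : ℤ) ^ Module.finrank ℚ (W ⊓ vanishingOn Fᶜ : Submodule ℚ (ι → ℚ)) = 0 := by
  have hne : (E \ G).Nonempty := Finset.sdiff_nonempty.2 hGE.2
  obtain ⟨e, he, he1, he2⟩ := id hE
  rw [← coneSign_eq_zero (W ⊓ vanishingOn Eᶜ) hne convex_univ isOpen_univ
    ⟨-e, neg_mem ⟨he, by simpa [mem_vanishingOn] using he2⟩, trivial,
      fun i hi => by simpa using he1 i (Finset.sdiff_subset hi)⟩, coneSign, Finset.sum_filter]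
  refine Finset.sum_nbij' (fun F => E \ F) (fun Z => E \ Z) ?_ ?_ ?_ ?_ ?_
  · intro F hF
    rw [Finset.mem_Icc] at hF
    exact Finset.mem_powerset.2 (Finset.sdiff_subset_sdiff le_rfl hF.1)
  · intro Z hZ
    rw [Finset.mem_powerset] at hZ
    refine Finset.mem_Icc.2 ⟨fun i hi => ?_, Finset.sdiff_subset⟩
    exact Finset.mem_sdiff.2 ⟨hGE.1 hi, fun h => (Finset.mem_sdiff.1 (hZ h)).2 hi⟩
  · intro F hF
    rw [Finset.mem_Icc] at hF
    exact Finset.sdiff_sdiff_eq_self hF.2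
  · intro Z hZ
    rw [Finset.mem_powerset] at hZ
    exact Finset.sdiff_sdiff_eq_self (hZ.trans Finset.sdiff_subset)
  · intro F hF
    rw [Finset.mem_Icc] at hF
    have h1 : W ⊓ vanishingOn Eᶜ ⊓ vanishingOn (E \ F) = W ⊓ vanishingOn Fᶜ := by
      ext x
      simp only [Submodule.mem_inf, mem_vanishingOn, Finset.mem_compl, Finset.mem_sdiff, and_assoc]
      refine and_congr_right fun _ => ⟨fun h i hi => ?_, fun h => ⟨fun i hi => ?_, fun i hi => ?_⟩⟩
      · by_cases hiE : i ∈ E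
        exacts [h.2 i ⟨hiE, hi⟩, h.1 i hiE]
      · exact h i fun h' => hi (hF.2 h')
      · exact h i hi.2
    have h2 : (E \ G) \ (E \ F) = F \ G := by
      ext i
      have := @hF.2 i
      simp only [Finset.mem_sdiff]
      tauto
    rw [h1, h2, cellSign, isFace_iff_of_subset hG hF.1]
    refine if_congr ?_ rfl rfl
    simp only [Submodule.mem_inf, mem_vanishingOn, Finset.mem_compl, Set.univ_inter,
      Set.mem_ofPred_eq, and_assoc]
    exact exists_congr fun x => by tauto

end EulerCharacteristic

section Reciprocity

open scoped Classical
open Polynomial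

/-- If the numbers `N F s` satisfy the recursions obtained by subtracting `σ`, and the faces below
`E` satisfy Euler's relations, then the count over the closed face `E` is a polynomial which is
reciprocal to the count over the open face. -/
theorem exists_polynomial_reciprocity {ι : Type*} [Fintype ι] [DecidableEq ι]
    (N : Finset ι → ℕ → ℕ) (face : Finset ι → Prop) (D : Finset ι → ℕ)
    (h_empty : face ∅) (hD : D ∅ = 0) (hN_empty : N ∅ 0 = 1) (hN_empty_succ : ∀ s, N ∅ (s + 1) = 0)
    (hN_zero : ∀ E : Finset ι, E.Nonempty → N E 0 = 0) (hN_face : ∀ E, ¬ face E → ∀ s, N E s = 0)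
    (hstep : ∀ E, face E → E.Nonempty → ∃ σ ⊆ E, σ.Nonempty ∧ (∀ G, face G → face (G ∪ σ)) ∧
      ∀ E', σ ⊆ E' → ∀ s, N E' (s + 1) = ∑ F with F ∪ σ = E', N F s)
    (hEuler : ∀ G E, face G → face E → G ⊂ E →
      ∑ F ∈ (Finset.Icc G E).filter face, (-1 : ℤ) ^ D F = 0)
    (E : Finset ι) (hE : face E) (hne : E.Nonempty) :
    ∃ h : ℚ[X], (∀ s : ℕ, h.eval (s : ℚ) = ∑ F ∈ E.powerset, (N F s : ℚ)) ∧
      ∀ s : ℕ, (N E (s + 1) : ℚ) = (-1) ^ (D E + 1) * h.eval (-((s : ℚ) + 1)) := by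
  induction E using Finset.strongInduction with
  | H E ih =>
  obtain ⟨σ, hσE, hσ, hunion, hrec⟩ := hstep E hE hne
  have euler : ∀ G, face G → G ⊆ E →
      ∑ F ∈ (Finset.Icc G E).filter face, (-1 : ℚ) ^ D F = if G = E then (-1) ^ D E else 0 := by
    intro G hG hGE
    split_ifs with h
    · subst h
      simp [Finset.filter_singleton, hG]
    · exact_mod_cast hEuler G E hG hE (hGE.ssubset_of_ne h)
  have euler' : ∀ G, face G → G ⊆ E →
      (-1 : ℚ) ^ (D E + 1) * ∑ F ∈ ((Finset.Icc G E).filter face).filter (¬ σ ⊆ ·), (-1) ^ D F =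
        if G ∪ σ = E ∧ ¬ σ ⊆ G then 1 else 0 := by
    intro G hG hGE
    have h1 : ((Finset.Icc G E).filter face).filter (σ ⊆ ·) =
        (Finset.Icc (G ∪ σ) E).filter face := by
      ext F
      simp only [Finset.mem_filter, Finset.mem_Icc, Finset.union_subset_iff]
      tauto
    have h2 := Finset.sum_filter_add_sum_filter_not ((Finset.Icc G E).filter face) (σ ⊆ ·)
      (fun F => (-1 : ℚ) ^ D F)
    rw [h1, euler G hG hGE, euler _ (hunion G hG) (Finset.union_subset hGE hσE)] at h2
    have h3 := eq_sub_of_add_eq' h2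
    rw [h3]
    have hsq : (-1 : ℚ) ^ (D E + 1) * (-1) ^ D E = -1 := by
      rw [pow_succ, mul_right_comm, ← mul_pow]
      simp
    by_cases hσG : σ ⊆ G
    · simp [Finset.union_eq_left.2 hσG, hσG]
    · have hGE' : G ≠ E := fun h => hσG (h ▸ hσE)
      by_cases h : G ∪ σ = E <;> simp [h, hGE', hσG, hsq]
  choose! h hh using fun F (hF : F ⊂ E) (hf : face F) (hn : F.Nonempty) => ih F hF hf hn
  set 𝓕 := E.powerset.filter (fun F => face F ∧ ¬ σ ⊆ F) with h𝓕
  have hss : ∀ F ∈ 𝓕, F ⊂ E ∧ face F := by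
    intro F hF
    simp only [h𝓕, Finset.mem_filter, Finset.mem_powerset] at hF
    exact ⟨hF.1.ssubset_of_ne fun he => hF.2.2 (he ▸ hσE), hF.2.1⟩
  have h_empty_mem : ∅ ∈ 𝓕 := by
    simp [h𝓕, h_empty, hσ.ne_empty]
  let Q : ℚ[X] := ∑ F ∈ 𝓕.erase ∅, C ((-1) ^ (D F + 1)) * (h F).comp (-X)
  have hQ : ∀ x, Q.eval x = ∑ F ∈ 𝓕.erase ∅, (-1) ^ (D F + 1) * (h F).eval (-x) := by
    intro x
    simp only [Q, eval_finsetSum, eval_mul, eval_C, eval_comp, eval_neg, eval_X]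
  obtain ⟨p, hp0, hp⟩ := exists_polynomial_shifted_sub Q
  refine ⟨p, ?_, ?_⟩
  · intro s
    induction s with
    | zero =>
      rw [Finset.sum_eq_single ∅]
      · simp [hp0, hN_empty]
      · intro F _ hF
        simp [hN_zero F (Finset.nonempty_iff_ne_empty.2 hF)]
      · simp
    | succ s ihs =>
      have h1 : ∑ F ∈ E.powerset with σ ⊆ F, N F (s + 1) = ∑ F ∈ E.powerset, N F s := by
        rw [Finset.sum_congr rfl fun F hF => hrec F (Finset.mem_filter.1 hF).2 s,
          ← Finset.sum_fiberwise_of_maps_to (s := E.powerset) (g := (· ∪ σ))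
            (t := E.powerset.filter (σ ⊆ ·))]
        · refine Finset.sum_congr rfl fun F hF => Finset.sum_congr ?_ fun _ _ => rfl
          ext G
          simp only [Finset.mem_filter, Finset.mem_univ, true_and, Finset.mem_powerset] at hF ⊢
          exact ⟨fun hG => ⟨(hG ▸ Finset.subset_union_left : G ⊆ F).trans hF.1, hG⟩, And.right⟩
        · intro F hF
          simp only [Finset.mem_filter, Finset.mem_powerset] at hF ⊢
          exact ⟨Finset.union_subset hF hσE, Finset.subset_union_right⟩
      have h2 : Q.eval ((s : ℚ) + 1) = ∑ F ∈ E.powerset with ¬ σ ⊆ F, (N F (s + 1) : ℚ) := by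
        rw [hQ]
        have h3 : 𝓕.erase ∅ ⊆ E.powerset.filter (¬ σ ⊆ ·) := by
          intro F hF
          have := Finset.mem_of_mem_erase hF
          simp only [h𝓕, Finset.mem_filter] at this ⊢
          exact ⟨this.1, this.2.2⟩
        rw [← Finset.sum_subset h3]
        · refine Finset.sum_congr rfl fun F hF => ?_
          obtain ⟨hn, hF⟩ := Finset.mem_erase.1 hF
          rw [(hh F (hss F hF).1 (hss F hF).2 (Finset.nonempty_iff_ne_empty.2 hn)).2 s]
        · intro F hF hF'
          rcases F.eq_empty_or_nonempty with rfl | hn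
          · simp [hN_empty_succ]
          · rw [hN_face, Nat.cast_zero]
            intro hf
            refine hF' (Finset.mem_erase.2 ⟨hn.ne_empty, ?_⟩)
            simp only [h𝓕, Finset.mem_filter] at hF ⊢
            exact ⟨hF.1, hf, hF.2⟩
      rw [← Finset.sum_filter_add_sum_filter_not _ (σ ⊆ ·), ← h2, ← hp, ← Nat.cast_sum, h1]
      push_cast
      rw [← ihs]
      ring
  · have hdiff : ∀ s : ℕ, (-1) ^ (D E + 1) * p.eval (-((s : ℚ) + 1)) =
        (-1) ^ (D E + 1) * p.eval (-(s : ℚ)) - (-1) ^ (D E + 1) * N ∅ s +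
          ((N E (s + 1) : ℚ) - N E s) := by
      intro s
      have h1 := hp (-((s : ℚ) + 1))
      have h2 : -((s : ℚ) + 1) + 1 = -s := by ring
      rw [h2, hQ, neg_neg] at h1
      have h3 : ∑ F ∈ 𝓕.erase ∅, (-1) ^ (D F + 1) * (h F).eval (s : ℚ) =
          ∑ F ∈ 𝓕, (-1) ^ (D F + 1) * ∑ G ∈ F.powerset, (N G s : ℚ) + N ∅ s := by
        rw [← Finset.sum_erase_add _ _ h_empty_mem, hD]
        have : ∀ F ∈ 𝓕.erase ∅, (-1) ^ (D F + 1) * (h F).eval (s : ℚ) =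
            (-1) ^ (D F + 1) * ∑ G ∈ F.powerset, (N G s : ℚ) := by
          intro F hF
          obtain ⟨hn, hF⟩ := Finset.mem_erase.1 hF
          rw [(hh F (hss F hF).1 (hss F hF).2 (Finset.nonempty_iff_ne_empty.2 hn)).1 s]
        rw [Finset.sum_congr rfl this]
        simp
      have h4 : (-1 : ℚ) ^ (D E + 1) * ∑ F ∈ 𝓕, (-1) ^ D F * ∑ G ∈ F.powerset, (N G s : ℚ) =
          ∑ G ∈ E.powerset, (N G s : ℚ) * if G ∪ σ = E ∧ ¬ σ ⊆ G then 1 else 0 := by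
        simp_rw [Finset.mul_sum]
        rw [Finset.sum_comm' (t' := E.powerset)
          (s' := fun G => ((Finset.Icc G E).filter fun F => face F ∧ ¬ σ ⊆ F))]
        · refine Finset.sum_congr rfl fun G hG => ?_
          by_cases hf : face G
          · rw [← euler' G hf (Finset.mem_powerset.1 hG), Finset.filter_filter, Finset.mul_sum,
              Finset.mul_sum]
            exact Finset.sum_congr rfl fun F _ => by ring
          · simp [hN_face G hf]
        · intro F G
          simp only [h𝓕, Finset.mem_filter, Finset.mem_powerset, Finset.mem_Icc]
          exact ⟨fun h => ⟨⟨⟨h.2, h.1.1⟩, h.1.2⟩, h.2.trans h.1.1⟩,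
            fun h => ⟨⟨h.1.1.2, h.1.2⟩, h.1.1.1⟩⟩
      have h5 : (N E (s + 1) : ℚ) =
          ∑ G ∈ E.powerset, ((N G s : ℚ) * if G ∪ σ = E ∧ ¬ σ ⊆ G then 1 else 0) + N E s := by
        rw [hrec E hσE s, Nat.cast_sum, ← Finset.sum_erase_add _ _
          (show E ∈ Finset.univ.filter (fun F => F ∪ σ = E) by simpa using hσE)]
        congr 1
        simp only [mul_ite, mul_one, mul_zero]
        rw [← Finset.sum_filter]
        refine Finset.sum_congr ?_ fun _ _ => rfl
        ext G
        simp only [Finset.mem_erase, Finset.mem_filter, Finset.mem_univ, true_and,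
          Finset.mem_powerset]
        constructor
        · rintro ⟨h1, h2⟩
          refine ⟨h2 ▸ Finset.subset_union_left, h2, fun h => h1 ?_⟩
          rwa [Finset.union_eq_left.2 h] at h2
        · rintro ⟨-, h1, h2⟩
          exact ⟨fun h => h2 (h ▸ hσE), h1⟩
      have h6 : ∑ F ∈ 𝓕, (-1) ^ (D F + 1) * ∑ G ∈ F.powerset, (N G s : ℚ) =
          - ∑ F ∈ 𝓕, (-1) ^ D F * ∑ G ∈ F.powerset, (N G s : ℚ) := by
        rw [← Finset.sum_neg_distrib]
        exact Finset.sum_congr rfl fun F _ => by ring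
      rw [h3, h6] at h1
      rw [h5, ← h4]
      linear_combination (-(-1 : ℚ) ^ (D E + 1)) * h1
    intro s
    induction s with
    | zero =>
      have := hdiff 0
      simp only [Nat.cast_zero, neg_zero, hp0, hN_empty, hN_zero E hne] at this ⊢
      rw [this]
      simp
    | succ s ihs =>
      have := hdiff (s + 1)
      rw [hN_empty_succ] at this
      push_cast at this ⊢
      rw [this, ← ihs]
      ring

end Reciprocity

section SemimagicSquares

open scoped Classical

/-- The matrices all of whose row and column sums are equal, as a subspace. -/
def lineSumSpace (n : ℕ) : Submodule ℚ (Fin n × Fin n → ℚ) where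
  carrier := {x | ∃ s, (∀ i, ∑ j, x (i, j) = s) ∧ ∀ j, ∑ i, x (i, j) = s}
  add_mem' := by
    rintro x y ⟨s, hs, hs'⟩ ⟨t, ht, ht'⟩
    exact ⟨s + t, fun i => by simp [Finset.sum_add_distrib, hs, ht],
      fun j => by simp [Finset.sum_add_distrib, hs', ht']⟩
  zero_mem' := ⟨0, by simp, by simp⟩
  smul_mem' := by
    rintro c x ⟨s, hs, hs'⟩
    exact ⟨c * s, fun i => by simp [← Finset.mul_sum, hs], fun j => by simp [← Finset.mul_sum, hs']⟩

theorem mem_lineSumSpace {n : ℕ} {x : Fin n × Fin n → ℚ} : x ∈ lineSumSpace n ↔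
    ∃ s, (∀ i, ∑ j, x (i, j) = s) ∧ ∀ j, ∑ i, x (i, j) = s := Iff.rfl

theorem finrank_lineSumSpace (m : ℕ) :
    Module.finrank ℚ (lineSumSpace (m + 1)) = m ^ 2 + 1 := by
  let f : lineSumSpace (m + 1) →ₗ[ℚ] (Fin m × Fin m → ℚ) × ℚ :=
    { toFun := fun x => (fun p => x.1 (p.1.castSucc, p.2.castSucc), ∑ j, x.1 (0, j))
      map_add' := fun x y => by ext <;> simp [Finset.sum_add_distrib]
      map_smul' := fun c x => by ext <;> simp [Finset.mul_sum] }
  have hinj : Function.Injective f := by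
    rw [← LinearMap.ker_eq_bot, LinearMap.ker_eq_bot']
    rintro ⟨x, s, hs, hs'⟩ hx
    have h1 : ∀ i j : Fin m, x (i.castSucc, j.castSucc) = 0 := fun i j =>
      congrFun (congrArg Prod.fst hx) (i, j)
    have h2 : s = 0 := by rw [← hs 0]; exact congrArg Prod.snd hx
    subst h2
    have h3 : ∀ i : Fin m, x (i.castSucc, Fin.last m) = 0 := fun i => by
      simpa [Fin.sum_univ_castSucc, h1] using hs i.castSucc
    have h4 : ∀ j : Fin (m + 1), x (Fin.last m, j) = 0 := fun j => by
      have := hs' j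
      rw [Fin.sum_univ_castSucc] at this
      refine Fin.lastCases (motive := fun j =>
        ∑ i : Fin m, x (i.castSucc, j) + x (Fin.last m, j) = 0 → x (Fin.last m, j) = 0) ?_ (fun j => ?_) j this <;> simp [h1, h3]
    ext ⟨i, j⟩
    refine Fin.lastCases ?_ (fun i => ?_) i
    · exact h4 j
    · exact Fin.lastCases (h3 i) (fun j => h1 i j) j
  have hsurj : Function.Surjective f := by
    rintro ⟨A, s⟩
    let x : Fin (m + 1) → Fin (m + 1) → ℚ := Fin.snoc (α := fun _ => Fin (m + 1) → ℚ)
      (fun i => Fin.snoc (α := fun _ => ℚ) (fun j => A (i, j)) (s - ∑ j, A (i, j)))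
      (Fin.snoc (α := fun _ => ℚ) (fun j => s - ∑ i, A (i, j)) (s - ∑ j, (s - ∑ i, A (i, j))))
    have hrow : ∀ i, ∑ j, x i j = s := fun i => by
      refine Fin.lastCases ?_ (fun i => ?_) i <;> simp [x, Fin.sum_univ_castSucc]
    have hcol : ∀ j, ∑ i, x i j = s := fun j => by
      refine Fin.lastCases ?_ (fun j => ?_) j
      · simp only [x, Fin.sum_univ_castSucc, Fin.snoc_castSucc, Fin.snoc_last,
          Finset.sum_sub_distrib]
        rw [Finset.sum_comm]
        ring
      · simp [x, Fin.sum_univ_castSucc]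
    refine ⟨⟨fun p => x p.1 p.2, s, hrow, hcol⟩, Prod.ext ?_ (hrow 0)⟩
    ext p
    simp [f, x]
  rw [(LinearEquiv.ofBijective f ⟨hinj, hsurj⟩).finrank_eq]
  simp [sq]

/-- The semi-magic squares of size `n` and line sum `s`. -/
noncomputable def semimagicSquares (n s : ℕ) : Finset (Matrix (Fin n) (Fin n) ℕ) :=
  ((Finset.Icc (0 : Fin n → Fin n → ℕ) fun _ _ => s).filter fun M =>
    (∀ i, ∑ j, M i j = s) ∧ ∀ j, ∑ i, M i j = s).map Matrix.of.toEmbedding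

theorem mem_semimagicSquares {n s : ℕ} {M : Matrix (Fin n) (Fin n) ℕ} :
    M ∈ semimagicSquares n s ↔ (∀ i, ∑ j, M i j = s) ∧ ∀ j, ∑ i, M i j = s := by
  rw [semimagicSquares, Finset.mem_map_equiv, Finset.mem_filter]
  refine and_iff_right_of_imp fun h => Finset.mem_Icc.2 ⟨fun i j => Nat.zero_le _, fun i j => ?_⟩
  rw [← h.1 i]
  exact Finset.single_le_sum (f := fun j => Matrix.of.symm M i j) (fun _ _ => Nat.zero_le _)
    (Finset.mem_univ j)

/-- The positions of the nonzero entries of `M`. -/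
def entrySupport {n : ℕ} (M : Matrix (Fin n) (Fin n) ℕ) : Finset (Fin n × Fin n) :=
  Finset.univ.filter fun p => M p.1 p.2 ≠ 0

/-- The number of semi-magic squares with line sum `s` and support `F`. -/
noncomputable def squareCount (n : ℕ) (F : Finset (Fin n × Fin n)) (s : ℕ) : ℕ :=
  ((semimagicSquares n s).filter (entrySupport · = F)).card

/-- The graph of a permutation. -/
def permGraph {n : ℕ} (σ : Equiv.Perm (Fin n)) : Finset (Fin n × Fin n) :=
  Finset.univ.filter fun p => σ p.1 = p.2

theorem mem_entrySupport {n : ℕ} {M : Matrix (Fin n) (Fin n) ℕ} {p : Fin n × Fin n} :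
    p ∈ entrySupport M ↔ M p.1 p.2 ≠ 0 := by simp [entrySupport]

theorem mem_permGraph {n : ℕ} {σ : Equiv.Perm (Fin n)} {p : Fin n × Fin n} :
    p ∈ permGraph σ ↔ σ p.1 = p.2 := by simp [permGraph]

theorem sum_perm_row {R : Type*} [AddCommMonoidWithOne R] {n : ℕ} (σ : Equiv.Perm (Fin n))
    (i : Fin n) : ∑ j, (if σ i = j then (1 : R) else 0) = 1 := by simp

theorem sum_perm_col {R : Type*} [AddCommMonoidWithOne R] {n : ℕ} (σ : Equiv.Perm (Fin n))
    (j : Fin n) : ∑ i, (if σ i = j then (1 : R) else 0) = 1 := by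
  simp [← Equiv.eq_symm_apply]

theorem isFace_permGraph {n : ℕ} (σ : Equiv.Perm (Fin n)) :
    IsFace (lineSumSpace n) (permGraph σ) := by
  refine ⟨fun p => if σ p.1 = p.2 then 1 else 0, ⟨1, sum_perm_row σ, sum_perm_col σ⟩,
    fun p hp => ?_, fun p hp => ?_⟩
  · simp [mem_permGraph.1 hp]
  · simp [mt mem_permGraph.2 hp]

theorem squareCount_succ {n : ℕ} (σ : Equiv.Perm (Fin n)) {E : Finset (Fin n × Fin n)}
    (hE : permGraph σ ⊆ E) (s : ℕ) :
    squareCount n E (s + 1) = ∑ F with F ∪ permGraph σ = E, squareCount n F s := by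
  have h1 : ∑ F with F ∪ permGraph σ = E, squareCount n F s =
      ((semimagicSquares n s).filter fun M => entrySupport M ∪ permGraph σ = E).card := by
    rw [Finset.card_eq_sum_card_fiberwise (f := entrySupport)
      (t := Finset.univ.filter fun F => F ∪ permGraph σ = E)]
    · refine Finset.sum_congr rfl fun F hF => ?_
      rw [squareCount, Finset.filter_filter]
      congr 1
      refine Finset.filter_congr fun M _ => ?_
      have := (Finset.mem_filter.1 hF).2
      exact ⟨fun h => ⟨h ▸ this, h⟩, And.right⟩
    · intro M hM
      simpa using (Finset.mem_filter.1 hM).2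
  rw [h1, squareCount]
  have hpos : ∀ M : Matrix (Fin n) (Fin n) ℕ, entrySupport M = E → ∀ i j,
      M i j - (if σ i = j then 1 else 0) + (if σ i = j then 1 else 0) = M i j := by
    intro M hM i j
    split_ifs with h
    · have : M i j ≠ 0 := (mem_entrySupport (p := (i, j))).1 (hM ▸ hE (mem_permGraph.2 h))
      omega
    · simp
  refine Finset.card_nbij' (fun M => Matrix.of fun i j => M i j - if σ i = j then 1 else 0)
    (fun M => Matrix.of fun i j => M i j + if σ i = j then 1 else 0) ?_ ?_ ?_ ?_
  · intro M hM
    obtain ⟨hM, hs⟩ := Finset.mem_filter.1 hM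
    rw [mem_semimagicSquares] at hM
    refine Finset.mem_filter.2 ⟨mem_semimagicSquares.2 ⟨fun i => ?_, fun j => ?_⟩, ?_⟩
    · have := hM.1 i
      rw [← Finset.sum_congr rfl fun j _ => hpos M hs i j, Finset.sum_add_distrib,
        sum_perm_row] at this
      exact Nat.add_right_cancel this
    · have := hM.2 j
      rw [← Finset.sum_congr rfl fun i _ => hpos M hs i j, Finset.sum_add_distrib,
        sum_perm_col] at this
      exact Nat.add_right_cancel this
    · ext ⟨i, j⟩
      rw [← hs, Finset.mem_union, mem_entrySupport, mem_entrySupport, mem_permGraph]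
      have := hpos M hs i j
      dsimp only [Matrix.of_apply]
      split_ifs at this ⊢ with h
      · simp only [h, or_true, true_iff]; omega
      · simp [h]
  · intro M hM
    obtain ⟨hM, hs⟩ := Finset.mem_filter.1 hM
    rw [mem_semimagicSquares] at hM
    refine Finset.mem_filter.2 ⟨mem_semimagicSquares.2 ⟨fun i => ?_, fun j => ?_⟩, ?_⟩
    · simp_rw [Matrix.of_apply]
      rw [Finset.sum_add_distrib, sum_perm_row, hM.1 i]
    · simp_rw [Matrix.of_apply]
      rw [Finset.sum_add_distrib, sum_perm_col, hM.2 j]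
    · ext ⟨i, j⟩
      rw [← hs, Finset.mem_union, mem_entrySupport, mem_entrySupport, mem_permGraph]
      dsimp only [Matrix.of_apply]
      split_ifs with h <;> simp [h]
  · intro M hM
    ext i j
    exact hpos M (Finset.mem_filter.1 hM).2 i j
  · intro M _
    ext i j
    simp

theorem isFace_entrySupport {n s : ℕ} {M : Matrix (Fin n) (Fin n) ℕ}
    (hM : M ∈ semimagicSquares n s) : IsFace (lineSumSpace n) (entrySupport M) := by
  rw [mem_semimagicSquares] at hM
  refine ⟨fun p => M p.1 p.2, ⟨s, fun i => ?_, fun j => ?_⟩, fun p hp => ?_, fun p hp => ?_⟩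
  · rw [← hM.1 i, Nat.cast_sum]
  · rw [← hM.2 j, Nat.cast_sum]
  · exact Nat.cast_pos.2 (Nat.pos_of_ne_zero (mem_entrySupport.1 hp))
  · simpa using mt mem_entrySupport.2 hp

theorem squareCount_eq_zero {n : ℕ} {F : Finset (Fin n × Fin n)}
    (hF : ¬ IsFace (lineSumSpace n) F) (s : ℕ) : squareCount n F s = 0 := by
  rw [squareCount, Finset.card_eq_zero, Finset.filter_eq_empty_iff]
  rintro M hM rfl
  exact hF (isFace_entrySupport hM)

theorem semimagicSquares_zero (n : ℕ) : semimagicSquares n 0 = {0} := by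
  ext M
  rw [mem_semimagicSquares, Finset.mem_singleton]
  constructor
  · rintro ⟨h, -⟩
    ext i j
    exact (Finset.sum_eq_zero_iff.1 (h i)) j (Finset.mem_univ j)
  · rintro rfl
    simp

theorem squareCount_zero {n : ℕ} (F : Finset (Fin n × Fin n)) :
    squareCount n F 0 = if F = ∅ then 1 else 0 := by
  have h : entrySupport (0 : Matrix (Fin n) (Fin n) ℕ) = ∅ := by
    ext p; simp [mem_entrySupport]
  rw [squareCount, semimagicSquares_zero, Finset.filter_singleton, h]
  simp only [eq_comm (a := F)]
  split_ifs <;> rfl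

theorem squareCount_empty_succ {n : ℕ} (hn : 1 ≤ n) (s : ℕ) : squareCount n ∅ (s + 1) = 0 := by
  rw [squareCount, Finset.card_eq_zero, Finset.filter_eq_empty_iff]
  intro M hM h
  have h0 := (mem_semimagicSquares.1 hM).1 ⟨0, hn⟩
  rw [Finset.sum_eq_zero] at h0
  · omega
  · intro j _
    by_contra hj
    have := (mem_entrySupport (M := M) (p := (⟨0, hn⟩, j))).2 hj
    simp [h] at this

/-- **Birkhoff**: every nonempty face contains the graph of a permutation. -/
theorem exists_permGraph_subset {n : ℕ} {E : Finset (Fin n × Fin n)}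
    (hE : IsFace (lineSumSpace n) E) (hne : E.Nonempty) :
    ∃ σ : Equiv.Perm (Fin n), permGraph σ ⊆ E := by
  obtain ⟨x, ⟨s, hrow, hcol⟩, hpos, hzero⟩ := hE
  have hx0 : ∀ p, 0 ≤ x p := fun p => by
    by_cases h : p ∈ E
    exacts [(hpos p h).le, (hzero p h).ge]
  obtain ⟨⟨a, b⟩, hab⟩ := hne
  have hs : 0 < s := by
    rw [← hrow a]
    exact (hpos _ hab).trans_le
      (Finset.single_le_sum (f := fun j => x (a, j)) (fun _ _ => hx0 _) (Finset.mem_univ b))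
  let M : Matrix (Fin n) (Fin n) ℚ := Matrix.of fun i j => x (i, j) / s
  have hM : M ∈ doublyStochastic ℚ (Fin n) := by
    rw [mem_doublyStochastic_iff_sum]
    refine ⟨fun i j => div_nonneg (hx0 _) hs.le, fun i => ?_, fun j => ?_⟩
    · simp [M, ← Finset.sum_div, hrow, hs.ne']
    · simp [M, ← Finset.sum_div, hcol, hs.ne']
  obtain ⟨w, hw0, hw1, hw⟩ := exists_eq_sum_perm_of_mem_doublyStochastic hM
  obtain ⟨σ, -, hσ⟩ : ∃ σ ∈ Finset.univ, w σ ≠ 0 := by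
    refine Finset.exists_ne_zero_of_sum_ne_zero (s := Finset.univ) (f := w) ?_
    rw [hw1]
    exact one_ne_zero
  refine ⟨σ, fun p hp => ?_⟩
  by_contra h
  have h1 : M p.1 p.2 = 0 := by simp [M, hzero p h]
  rw [← hw, Matrix.sum_apply, Finset.sum_eq_zero_iff_of_nonneg] at h1
  · have := h1 σ (Finset.mem_univ σ)
    simp [Equiv.Perm.permMatrix, PEquiv.toMatrix_apply, Equiv.toPEquiv_apply,
      mem_permGraph.1 hp, hσ] at this
  · intro τ _
    refine mul_nonneg (hw0 τ) ?_
    simp only [Equiv.Perm.permMatrix, PEquiv.toMatrix_apply]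
    split_ifs <;> simp

theorem isFace_univ (n : ℕ) : IsFace (lineSumSpace n) Finset.univ :=
  ⟨1, ⟨n, by simp, by simp⟩, by simp, by simp⟩

theorem isFace_empty (n : ℕ) : IsFace (lineSumSpace n) ∅ :=
  ⟨0, zero_mem _, by simp, by simp⟩

/-- The number of semi-magic squares is a polynomial in the line sum, reciprocal to the number of
semi-magic squares with positive entries. -/
theorem exists_polynomial_semimagicSquares (m : ℕ) :
    ∃ h : Polynomial ℚ, (∀ s : ℕ, h.eval (s : ℚ) = (semimagicSquares (m + 1) s).card) ∧
      ∀ s : ℕ, (squareCount (m + 1) Finset.univ (s + 1) : ℚ) =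
        (-1) ^ m ^ 2 * h.eval (-((s : ℚ) + 1)) := by
  have hD : Module.finrank ℚ (lineSumSpace (m + 1) ⊓ vanishingOn ∅ᶜ : Submodule ℚ _) = 0 := by
    refine Submodule.finrank_eq_zero.2 ((Submodule.eq_bot_iff _).2 fun x hx => ?_)
    ext p
    exact hx.2 p (by simp)
  have hstep : ∀ E, IsFace (lineSumSpace (m + 1)) E → E.Nonempty → ∃ σ ⊆ E, σ.Nonempty ∧
      (∀ G, IsFace (lineSumSpace (m + 1)) G → IsFace (lineSumSpace (m + 1)) (G ∪ σ)) ∧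
      ∀ E', σ ⊆ E' → ∀ s, squareCount (m + 1) E' (s + 1) =
        ∑ F with F ∪ σ = E', squareCount (m + 1) F s := by
    intro E hE hne
    obtain ⟨σ, hσ⟩ := exists_permGraph_subset hE hne
    exact ⟨permGraph σ, hσ, ⟨(0, σ 0), mem_permGraph.2 rfl⟩,
      fun G hG => hG.union (isFace_permGraph σ), fun E' hE' => squareCount_succ σ hE'⟩
  obtain ⟨h, h1, h2⟩ := exists_polynomial_reciprocity (squareCount (m + 1))
    (IsFace (lineSumSpace (m + 1)))
    (fun F => Module.finrank ℚ (lineSumSpace (m + 1) ⊓ vanishingOn Fᶜ : Submodule ℚ _))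
    (isFace_empty _) hD (by simp [squareCount_zero]) (squareCount_empty_succ (by omega))
    (fun E hE => by simp [squareCount_zero, hE.ne_empty]) (fun E hE => squareCount_eq_zero hE)
    hstep (fun G E => sum_faces_neg_one_pow _) Finset.univ (isFace_univ _) Finset.univ_nonempty
  refine ⟨h, fun s => ?_, fun s => ?_⟩
  · rw [h1, Finset.powerset_univ, Finset.card_eq_sum_card_fiberwise (f := entrySupport)
      (t := Finset.univ) (by simp)]
    simp [squareCount]
  · have h3 : (lineSumSpace (m + 1) ⊓ vanishingOn Finset.univᶜ : Submodule ℚ _) =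
        lineSumSpace (m + 1) :=
      inf_eq_left.2 fun x _ => by simp [mem_vanishingOn]
    rw [h2, h3, finrank_lineSumSpace]
    ring

end SemimagicSquares

/-- Ehrhart–Macdonald reciprocity for the Birkhoff polytope: if `H` is the
Ehrhart polynomial of `B_n` (counting semi-magic squares), then for every
`t ≥ n` the number of `n × n` positive-integer matrices with all row and
column sums equal to `t` is `(−1)^{(n−1)²} H(−t)`. -/
theorem birkhoff_reciprocity (n : ℕ) (hn : 1 ≤ n) (H : Polynomial ℚ)
    (hH : ∀ s : ℕ, 0 < s →
      H.eval (s : ℚ) = Nat.card {M : Matrix (Fin n) (Fin n) ℕ //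
        (∀ i, ∑ j, M i j = s) ∧ (∀ j, ∑ i, M i j = s)}) :
    ∀ t : ℕ, n ≤ t →
      (Nat.card {M : Matrix (Fin n) (Fin n) ℕ //
          (∀ i j, 1 ≤ M i j) ∧ (∀ i, ∑ j, M i j = t) ∧
            (∀ j, ∑ i, M i j = t)} : ℚ) =
        (-1) ^ ((n - 1) ^ 2) * H.eval (-(t : ℚ)) := by
  obtain ⟨m, rfl⟩ : ∃ m, n = m + 1 := ⟨n - 1, by omega⟩
  obtain ⟨h, h1, h2⟩ := exists_polynomial_semimagicSquares m
  have hHh : H = h := by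
    refine Polynomial.eq_of_infinite_eval_eq H h (Set.Infinite.mono ?_
      ((Set.Ioi_infinite 0).image (Nat.cast_injective (R := ℚ)).injOn))
    rintro _ ⟨s, hs, rfl⟩
    have h3 : H.eval (s : ℚ) = h.eval (s : ℚ) := by
      rw [hH s hs, h1 s, Nat.subtype_card (semimagicSquares (m + 1) s)
        fun M => mem_semimagicSquares]
    exact h3
  subst hHh
  intro t ht
  obtain ⟨s, rfl⟩ : ∃ s, t = s + 1 := ⟨t - 1, by omega⟩
  rw [Nat.cast_succ, Nat.add_sub_cancel, ← h2 s, squareCount]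
  refine congrArg _ (Nat.subtype_card _ fun M => ?_)
  rw [Finset.mem_filter, mem_semimagicSquares, Finset.eq_univ_iff_forall, and_comm]
  simp [mem_entrySupport, Nat.one_le_iff_ne_zero]
end
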